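/- arXiv:1508.01918 — 2 statements merged into one kernel-verified Lean document; each statement's English description precedes it below -/
import Mathlib

section
/- For every dimension N ≥ 1, every exponent p ∈ [1, +∞), and every ϱ > 0, there exists a constant C > 0 depending only on N, p and ϱ such that: for every nondegenerate simplex T ⊆ ℝ^N (the interior of the convex hull of N+1 affinely independent points) with diameter h_T and inradius r_T satisfying ϱ·h_T ≤ r_T, and every function w that is continuously differentiable on an open neighbourhood of the closure of T, the continuous trace inequality h_T^{1/p} · ‖w‖_{L^p(∂T, μ)} ≤ C · ( ‖w‖_{L^p(T)} + h_T · ‖∇w‖_{L^p(T; ℝ^N)} ) holds, where μ is the (N−1)-dimensional Hausdorff measure on the topological boundary ∂T of T. -/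
open MeasureTheory Metric
open scoped ENNReal

noncomputable section

/-!
The inequality holds for every bounded convex set `T` containing a ball of radius comparable to its
diameter. Put the centre of that ball at the origin. The radial projection
`x ↦ (gauge T x)⁻¹ • x` onto `∂T` is Lipschitz away from the unit ball, so `∂T` is covered by the
Lipschitz images of the faces of the cube `[-1, 1] ^ N`, which turns the Hausdorff measure on `∂T`
into Lebesgue measure on the faces. On the segment from half way to the boundary point along a
fixed ray, the fundamental theorem of calculus bounds `‖w‖ ^ p` at the boundary point by an average
of `‖w‖ ^ p + h ^ p * ‖Dw‖ ^ p`. Integrating over all rays through a face gives an integral over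
`T` in the cone coordinates `(t, y) ↦ t • (±1, y)`, whose Jacobian `|t| ^ (N - 1)` is bounded below
on these segments.
-/

lemma rpow_lintegral_le_measure_univ_rpow_mul_lintegral_rpow {α : Type*} [MeasurableSpace α]
    {μ : Measure α} {P : ℝ} (hP : 1 ≤ P) {f : α → ℝ≥0∞} (hf : AEMeasurable f μ) :
    (∫⁻ x, f x ∂μ) ^ P ≤ μ Set.univ ^ (P - 1) * ∫⁻ x, f x ^ P ∂μ := by
  have hP0 : 0 < P := one_pos.trans_le hP
  have h := eLpNorm'_le_eLpNorm'_mul_rpow_measure_univ one_pos hP hf.aestronglyMeasurable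
  simp only [eLpNorm', enorm_eq_self, ENNReal.rpow_one, div_one] at h
  calc (∫⁻ x, f x ∂μ) ^ P
      ≤ ((∫⁻ x, f x ^ P ∂μ) ^ (1 / P) * μ Set.univ ^ (1 - 1 / P)) ^ P := by gcongr
    _ = μ Set.univ ^ (P - 1) * ∫⁻ x, f x ^ P ∂μ := by
      rw [ENNReal.mul_rpow_of_nonneg _ _ hP0.le, ← ENNReal.rpow_mul, ← ENNReal.rpow_mul,
        one_div_mul_cancel hP0.ne', ENNReal.rpow_one, mul_comm, sub_mul,
        one_div_mul_cancel hP0.ne', one_mul]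

section Interval

variable {F : Type*} [NormedAddCommGroup F] [NormedSpace ℝ F] {u u' : ℝ → F} {a b : ℝ}

lemma enorm_right_le_enorm_add_lintegral_enorm_deriv
    (hu : ∀ t ∈ Set.Icc a b, HasDerivAt u (u' t) t) (hu' : ContinuousOn u' (Set.Icc a b))
    {t : ℝ} (ht : t ∈ Set.Icc a b) :
    ‖u b‖ₑ ≤ ‖u t‖ₑ + ∫⁻ s in Set.Icc a b, ‖u' s‖ₑ := by
  have hsub : Set.Icc t b ⊆ Set.Icc a b := Set.Icc_subset_Icc_left ht.1
  have hint : IntegrableOn u' (Set.Ioc t b) :=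
    ((hu'.mono hsub).integrableOn_Icc).mono_set Set.Ioc_subset_Icc_self
  have hnorm : ‖u b - u t‖ ≤ ∫ s in t..b, ‖u' s‖ :=
    norm_sub_le_integral_of_norm_deriv_le_of_le ht.2
      (fun s hs => (hu s (hsub hs)).continuousAt.continuousWithinAt)
      (fun s hs =>
        (hu s (hsub (Set.Ioo_subset_Icc_self hs))).differentiableAt.differentiableWithinAt)
      (.of_forall fun s hs => by rw [(hu s (hsub (Set.Ioo_subset_Icc_self hs))).deriv])
      ((hu'.norm.mono hsub).intervalIntegrable_of_Icc ht.2)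
  have hsub_le : ‖u b - u t‖ₑ ≤ ∫⁻ s in Set.Icc a b, ‖u' s‖ₑ := by
    rw [intervalIntegral.integral_of_le ht.2] at hnorm
    calc ‖u b - u t‖ₑ = ENNReal.ofReal ‖u b - u t‖ := (ofReal_norm _).symm
      _ ≤ ENNReal.ofReal (∫ s in Set.Ioc t b, ‖u' s‖) := ENNReal.ofReal_le_ofReal hnorm
      _ = ∫⁻ s in Set.Ioc t b, ‖u' s‖ₑ := ofReal_integral_norm_eq_lintegral_enorm hint
      _ ≤ ∫⁻ s in Set.Icc a b, ‖u' s‖ₑ :=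
        lintegral_mono_set (Set.Ioc_subset_Icc_self.trans hsub)
  calc ‖u b‖ₑ = ‖u t + (u b - u t)‖ₑ := by rw [add_sub_cancel]
    _ ≤ ‖u t‖ₑ + ‖u b - u t‖ₑ := enorm_add_le _ _
    _ ≤ ‖u t‖ₑ + ∫⁻ s in Set.Icc a b, ‖u' s‖ₑ := by gcongr

lemma length_mul_enorm_right_rpow_le {P : ℝ} (hP : 1 ≤ P)
    (hu : ∀ t ∈ Set.Icc a b, HasDerivAt u (u' t) t) (hu' : ContinuousOn u' (Set.Icc a b)) :
    ENNReal.ofReal (b - a) * ‖u b‖ₑ ^ P ≤ 2 ^ (P - 1) *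
      ∫⁻ t in Set.Icc a b, (‖u t‖ₑ ^ P + ENNReal.ofReal (b - a) ^ P * ‖u' t‖ₑ ^ P) := by
  set ℓ := ENNReal.ofReal (b - a)
  set J := ∫⁻ t in Set.Icc a b, ‖u' t‖ₑ ^ P
  have hvol : volume (Set.Icc a b) = ℓ := Real.volume_Icc
  have hJensen : (∫⁻ t in Set.Icc a b, ‖u' t‖ₑ) ^ P ≤ ℓ ^ (P - 1) * J := by
    simpa only [Measure.restrict_apply_univ, hvol] using
      rpow_lintegral_le_measure_univ_rpow_mul_lintegral_rpow hP
        (μ := volume.restrict (Set.Icc a b)) (hu'.aestronglyMeasurable measurableSet_Icc).enorm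
  have hpointwise : ∀ t ∈ Set.Icc a b,
      ‖u b‖ₑ ^ P ≤ 2 ^ (P - 1) * (‖u t‖ₑ ^ P + ℓ ^ (P - 1) * J) := fun t ht =>
    calc ‖u b‖ₑ ^ P ≤ (‖u t‖ₑ + ∫⁻ s in Set.Icc a b, ‖u' s‖ₑ) ^ P := by
          gcongr
          exact enorm_right_le_enorm_add_lintegral_enorm_deriv hu hu' ht
      _ ≤ 2 ^ (P - 1) * (‖u t‖ₑ ^ P + (∫⁻ s in Set.Icc a b, ‖u' s‖ₑ) ^ P) :=
        ENNReal.rpow_add_le_mul_rpow_add_rpow _ _ hP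
      _ ≤ 2 ^ (P - 1) * (‖u t‖ₑ ^ P + ℓ ^ (P - 1) * J) := by gcongr
  have hum : AEMeasurable (fun t => ‖u t‖ₑ ^ P) (volume.restrict (Set.Icc a b)) := by
    have huc : ContinuousOn u (Set.Icc a b) := fun t ht =>
      (hu t ht).continuousAt.continuousWithinAt
    exact (huc.aestronglyMeasurable measurableSet_Icc).enorm.pow_const _
  have hℓ : ℓ ^ (P - 1) * ℓ = ℓ ^ P := by
    conv_lhs => rw [← ENNReal.rpow_one ℓ, ← ENNReal.rpow_mul, one_mul]
    rw [← ENNReal.rpow_add_of_nonneg _ _ (sub_nonneg.2 hP) zero_le_one, sub_add_cancel]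
  calc ℓ * ‖u b‖ₑ ^ P = ∫⁻ _ in Set.Icc a b, ‖u b‖ₑ ^ P := by
        rw [setLIntegral_const, hvol, mul_comm]
    _ ≤ ∫⁻ t in Set.Icc a b, 2 ^ (P - 1) * (‖u t‖ₑ ^ P + ℓ ^ (P - 1) * J) :=
      setLIntegral_mono' measurableSet_Icc hpointwise
    _ = 2 ^ (P - 1) * ((∫⁻ t in Set.Icc a b, ‖u t‖ₑ ^ P) + ℓ ^ P * J) := by
      rw [lintegral_const_mul' _ _ (by finiteness), lintegral_add_left' hum, setLIntegral_const,
        hvol, mul_right_comm, hℓ]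
    _ = _ := by
      rw [lintegral_add_left' hum, lintegral_const_mul' _ _ (by finiteness)]

end Interval

section Gauge

variable {E : Type*} [NormedAddCommGroup E] [NormedSpace ℝ E] {K : Set E} {r h : ℝ}

/-- The central projection onto the frontier of a convex neighbourhood `K` of the origin: `x ≠ 0`
is sent to the point where the ray from the origin through `x` leaves `K`. -/
def radialProjection (K : Set E) (x : E) : E := (gauge K x)⁻¹ • x

lemma norm_le_mul_gauge (hK : K ∈ nhds 0) (hh : 0 < h) (hKh : K ⊆ closedBall 0 h) (x : E) :
    ‖x‖ ≤ h * gauge K x := by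
  rw [mul_comm, ← div_le_iff₀ hh]
  exact le_gauge_of_subset_closedBall (absorbent_nhds_zero hK) hh.le hKh

lemma inv_gauge_mul_norm_le (hK : K ∈ nhds 0) (hh : 0 < h) (hKh : K ⊆ closedBall 0 h) (x : E) :
    (gauge K x)⁻¹ * ‖x‖ ≤ h :=
  inv_mul_le_of_le_mul₀ (gauge_nonneg x) hh.le (mul_comm h _ ▸ norm_le_mul_gauge hK hh hKh x)

lemma gauge_pos_of_one_le_norm (hK : K ∈ nhds 0) (hh : 0 < h) (hKh : K ⊆ closedBall 0 h) {x : E}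
    (hx : 1 ≤ ‖x‖) : 0 < gauge K x :=
  pos_of_mul_pos_right (one_pos.trans_le (hx.trans (norm_le_mul_gauge hK hh hKh x))) hh.le

lemma lipschitzOnWith_radialProjection (hconv : Convex ℝ K) (hr : 0 < r) (hK : ball 0 r ⊆ K)
    (hh : 0 < h) (hKh : K ⊆ closedBall 0 h) :
    LipschitzOnWith (h + h ^ 2 / r).toNNReal (radialProjection K) {x | 1 ≤ ‖x‖} := by
  have hK0 : K ∈ nhds 0 := Filter.mem_of_superset (ball_mem_nhds 0 hr) hK
  have hbound := inv_gauge_mul_norm_le hK0 hh hKh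
  refine LipschitzOnWith.of_dist_le_mul fun x hx y hy => ?_
  have hx_pos := gauge_pos_of_one_le_norm hK0 hh hKh hx
  have hy_pos := gauge_pos_of_one_le_norm hK0 hh hKh hy
  have hx_inv : (gauge K x)⁻¹ ≤ h :=
    (le_mul_of_one_le_right (inv_nonneg.2 hx_pos.le) hx).trans (hbound x)
  have hgauge : |gauge K y - gauge K x| ≤ r⁻¹ * ‖x - y‖ := by
    have := (hconv.lipschitzWith_gauge (r := ⟨r, hr.le⟩) hr hK).dist_le_mul y x
    rwa [Real.dist_eq, dist_comm, dist_eq_norm] at this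
  have hinv : ‖(gauge K x)⁻¹ - (gauge K y)⁻¹‖ * ‖y‖ ≤ h ^ 2 / r * ‖x - y‖ := by
    rw [inv_sub_inv hx_pos.ne' hy_pos.ne', Real.norm_eq_abs, abs_div,
      abs_of_pos (mul_pos hx_pos hy_pos)]
    calc |gauge K y - gauge K x| / (gauge K x * gauge K y) * ‖y‖
        = |gauge K y - gauge K x| * (gauge K x)⁻¹ * ((gauge K y)⁻¹ * ‖y‖) := by
          rw [div_eq_mul_inv, mul_inv]; ring
      _ ≤ r⁻¹ * ‖x - y‖ * h * h :=
          mul_le_mul (mul_le_mul hgauge hx_inv (by positivity) (by positivity)) (hbound y)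
            (by positivity) (by positivity)
      _ = h ^ 2 / r * ‖x - y‖ := by ring
  rw [Real.coe_toNNReal _ (by positivity), dist_eq_norm, dist_eq_norm]
  calc ‖radialProjection K x - radialProjection K y‖
      = ‖(gauge K x)⁻¹ • (x - y) + ((gauge K x)⁻¹ - (gauge K y)⁻¹) • y‖ := by
        rw [radialProjection, radialProjection, smul_sub, sub_smul, sub_add_sub_cancel]
    _ ≤ (gauge K x)⁻¹ * ‖x - y‖ + ‖(gauge K x)⁻¹ - (gauge K y)⁻¹‖ * ‖y‖ := by
        refine (norm_add_le _ _).trans_eq ?_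
        rw [norm_smul, norm_smul, Real.norm_of_nonneg (inv_nonneg.2 hx_pos.le)]
    _ ≤ h * ‖x - y‖ + h ^ 2 / r * ‖x - y‖ := by gcongr
    _ = (h + h ^ 2 / r) * ‖x - y‖ := by ring

lemma smul_mem_of_le_inv_gauge (hconv : Convex ℝ K) (hKc : IsClosed K) (hK : K ∈ nhds 0) {x : E}
    {t : ℝ} (ht : 0 ≤ t) (htx : t ≤ (gauge K x)⁻¹) : t • x ∈ K := by
  rw [← hKc.closure_eq, ← gauge_le_one_iff_mem_closure hconv hK, gauge_smul_of_nonneg ht]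
  exact (mul_le_mul_of_nonneg_right htx (gauge_nonneg x)).trans inv_mul_le_one

lemma radialProjection_smul_of_mem_frontier (hconv : Convex ℝ K) (hK : K ∈ nhds 0) {x : E}
    (hx : x ∈ frontier K) {c : ℝ} (hc : 0 < c) : radialProjection K (c • x) = x := by
  rw [radialProjection, gauge_smul_of_nonneg hc.le, (gauge_eq_one_iff_mem_frontier hconv hK).2 hx,
    smul_eq_mul, mul_one, inv_smul_smul₀ hc.ne']

end Gauge

section Cube

variable {M : ℕ}

/-- The parametrization by `y` of the hyperplane `x i = σ`, `σ = ±1`, carrying a face of the cube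
`[-1, 1] ^ (M + 1)`; the face itself corresponds to `y ∈ [-1, 1] ^ M`. -/
def cubeFace (i : Fin (M + 1)) (σ : ℤˣ) (y : Fin M → ℝ) : EuclideanSpace ℝ (Fin (M + 1)) :=
  WithLp.toLp 2 (i.insertNth ((σ : ℤ) : ℝ) y)

lemma enorm_pow_finrank_mul_lintegral_comp_smul {E : Type*} [NormedAddCommGroup E]
    [NormedSpace ℝ E] [FiniteDimensional ℝ E] [MeasurableSpace E] [BorelSpace E] (μ : Measure E)
    [μ.IsAddHaarMeasure] {t : ℝ} (ht : t ≠ 0) (f : E → ℝ≥0∞) :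
    ‖t‖ₑ ^ Module.finrank ℝ E * ∫⁻ x, f (t • x) ∂μ = ∫⁻ x, f x ∂μ := by
  have hmap := (measurableEmbedding_const_smul₀ (α := E) ht).lintegral_map f (μ := μ)
  rw [← hmap, Measure.map_addHaar_smul μ ht, lintegral_smul_measure, smul_eq_mul, ← mul_assoc,
    abs_inv, abs_pow, ENNReal.ofReal_inv_of_pos (by positivity),
    ENNReal.ofReal_pow (abs_nonneg t), ← Real.enorm_eq_ofReal_abs,
    ENNReal.mul_inv_cancel (by simp [ht]) (by finiteness), one_mul]

lemma lintegral_toLp_insertNth (i : Fin (M + 1)) {G : EuclideanSpace ℝ (Fin (M + 1)) → ℝ≥0∞}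
    (hG : Measurable G) :
    ∫⁻ t : ℝ, ∫⁻ y : Fin M → ℝ, G (WithLp.toLp 2 (i.insertNth t y)) = ∫⁻ x, G x := by
  have hpres := (PiLp.volume_preserving_toLp (Fin (M + 1))).comp
    (volume_preserving_piFinSuccAbove (fun _ => ℝ) i).symm
  rw [← hpres.lintegral_comp hG]
  exact (lintegral_prod _ (hG.comp hpres.measurable).aemeasurable).symm

lemma smul_cubeFace (i : Fin (M + 1)) (σ : ℤˣ) (t : ℝ) (y : Fin M → ℝ) :
    t • cubeFace i σ y = WithLp.toLp 2 (i.insertNth (t * ((σ : ℤ) : ℝ)) (t • y)) := by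
  ext k
  induction k using Fin.succAboveCases i <;> simp [cubeFace]

lemma lintegral_lintegral_enorm_pow_mul_smul_cubeFace (i : Fin (M + 1)) (σ : ℤˣ)
    {G : EuclideanSpace ℝ (Fin (M + 1)) → ℝ≥0∞} (hG : Measurable G) :
    ∫⁻ y, ∫⁻ t : ℝ, ‖t‖ₑ ^ M * G (t • cubeFace i σ y) = ∫⁻ x, G x := by
  have hmeas : Measurable fun q : (Fin M → ℝ) × ℝ => ‖q.2‖ₑ ^ M * G (q.2 • cubeFace i σ q.1) := by
    refine (by fun_prop : Measurable fun q : (Fin M → ℝ) × ℝ => ‖q.2‖ₑ ^ M).mul (hG.comp ?_)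
    unfold cubeFace
    fun_prop
  have hscale : ∀ t : ℝ, t ≠ 0 → ∫⁻ y, ‖t‖ₑ ^ M * G (t • cubeFace i σ y) =
      ∫⁻ y : Fin M → ℝ, G (WithLp.toLp 2 (i.insertNth (t * ((σ : ℤ) : ℝ)) y)) := fun t ht => by
    rw [lintegral_const_mul' _ _ (by finiteness)]
    simp_rw [smul_cubeFace]
    simpa only [Module.finrank_fin_fun] using
      enorm_pow_finrank_mul_lintegral_comp_smul volume ht
        fun y : Fin M → ℝ => G (WithLp.toLp 2 (i.insertNth (t * ((σ : ℤ) : ℝ)) y))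
  rw [lintegral_lintegral_swap hmeas.aemeasurable,
    lintegral_congr_ae ((Measure.ae_ne volume 0).mono hscale), ← lintegral_toLp_insertNth i hG]
  rcases Int.units_eq_one_or σ with rfl | rfl
  · simp
  · simpa using lintegral_neg_eq_self (μ := volume)
      fun t : ℝ => ∫⁻ y : Fin M → ℝ, G (WithLp.toLp 2 (i.insertNth t y))

lemma one_le_norm_cubeFace (i : Fin (M + 1)) (σ : ℤˣ) (y : Fin M → ℝ) :
    1 ≤ ‖cubeFace i σ y‖ := by
  have := PiLp.norm_apply_le (cubeFace i σ y) i
  rcases Int.units_eq_one_or σ with rfl | rfl <;> simpa [cubeFace] using this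

lemma norm_cubeFace_le (i : Fin (M + 1)) (σ : ℤˣ) {y : Fin M → ℝ}
    (hy : y ∈ Set.Icc (-1 : Fin M → ℝ) 1) : ‖cubeFace i σ y‖ ≤ √(M + 1) := by
  have hcoord : ∀ k, cubeFace i σ y k ^ 2 ≤ 1 := fun k => by
    induction k using Fin.succAboveCases i with
    | x => rcases Int.units_eq_one_or σ with rfl | rfl <;> simp [cubeFace]
    | p k => simpa [cubeFace, sq_le_one_iff_abs_le_one, abs_le] using ⟨hy.1 k, hy.2 k⟩
  rw [EuclideanSpace.norm_eq]
  refine Real.sqrt_le_sqrt ?_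
  simpa using Finset.sum_le_sum fun k (_ : k ∈ Finset.univ) => hcoord k

lemma lipschitzWith_cubeFace (i : Fin (M + 1)) (σ : ℤˣ) :
    LipschitzWith (√(M + 1)).toNNReal (cubeFace i σ) := by
  refine LipschitzWith.of_dist_le_mul fun y z => ?_
  have hcoord : ∀ k, dist (cubeFace i σ y k) (cubeFace i σ z k) ^ 2 ≤ dist y z ^ 2 := fun k => by
    induction k using Fin.succAboveCases i with
    | x => simp [cubeFace]
    | p k => simpa [cubeFace] using pow_le_pow_left₀ dist_nonneg (dist_le_pi_dist y z k) 2
  rw [Real.coe_toNNReal _ (Real.sqrt_nonneg _), EuclideanSpace.dist_eq]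
  refine Real.sqrt_le_iff.2 ⟨by positivity, ?_⟩
  rw [mul_pow, Real.sq_sqrt (by positivity)]
  simpa using Finset.sum_le_sum fun k (_ : k ∈ Finset.univ) => hcoord k

lemma exists_smul_eq_cubeFace {x : EuclideanSpace ℝ (Fin (M + 1))} (hx : x ≠ 0) :
    ∃ c > (0 : ℝ), ∃ i σ, ∃ y ∈ Set.Icc (-1 : Fin M → ℝ) 1, c • x = cubeFace i σ y := by
  obtain ⟨i, hi⟩ := Finite.exists_max fun k => |x k|
  have hxi : x i ≠ 0 := fun h0 => hx <| by
    ext k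
    simpa [h0] using hi k
  have hc : 0 < |x i|⁻¹ := by positivity
  obtain ⟨σ, hσ⟩ : ∃ σ : ℤˣ, |x i|⁻¹ * x i = ((σ : ℤ) : ℝ) := by
    rcases hxi.lt_or_gt with hneg | hpos
    · exact ⟨-1, by rw [abs_of_neg hneg]; simp [hxi, inv_neg]⟩
    · exact ⟨1, by rw [abs_of_pos hpos]; simp [hxi]⟩
  have hle : ∀ k, |(|x i|⁻¹ * x k)| ≤ 1 := fun k => by
    rw [abs_mul, abs_of_pos hc]
    exact inv_mul_le_one_of_le₀ (hi k) (abs_nonneg _)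
  refine ⟨|x i|⁻¹, hc, i, σ, fun k => |x i|⁻¹ * x (i.succAbove k),
    ⟨fun k => (abs_le.1 (hle _)).1, fun k => (abs_le.1 (hle _)).2⟩, ?_⟩
  ext k
  induction k using Fin.succAboveCases i <;> simp [cubeFace, hσ]

end Cube

lemma setLIntegral_hausdorffMeasure_image_le {ι X : Type*} [Fintype ι] [MetricSpace X]
    [MeasurableSpace X] [BorelSpace X] {L : NNReal} {g : (ι → ℝ) → X} (hg : LipschitzWith L g)
    (S : Set (ι → ℝ)) (f : X → ℝ≥0∞) :
    ∫⁻ x in g '' S, f x ∂μH[Fintype.card ι] ≤ L ^ Fintype.card ι * ∫⁻ y in S, f (g y) := by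
  have hgm : Measurable g := hg.continuous.measurable
  have hle : (μH[Fintype.card ι]).restrict (g '' S) ≤
      (L : ℝ≥0∞) ^ Fintype.card ι • (volume.restrict S).map g := by
    refine Measure.le_iff.2 fun B hB => ?_
    rw [Measure.restrict_apply hB, Measure.smul_apply, Measure.map_apply hgm hB,
      Measure.restrict_apply (hgm hB), ← Set.image_preimage_inter]
    simpa only [hausdorffMeasure_pi_real, ENNReal.rpow_natCast, smul_eq_mul] using
      hg.hausdorffMeasure_image_le (Nat.cast_nonneg (Fintype.card ι)) (g ⁻¹' B ∩ S)
  calc ∫⁻ x in g '' S, f x ∂μH[Fintype.card ι]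
      ≤ ∫⁻ x, f x ∂((L : ℝ≥0∞) ^ Fintype.card ι • (volume.restrict S).map g) :=
        lintegral_mono' hle le_rfl
    _ = L ^ Fintype.card ι * ∫⁻ x, f x ∂(volume.restrict S).map g := by
        rw [lintegral_smul_measure, smul_eq_mul]
    _ ≤ L ^ Fintype.card ι * ∫⁻ y in S, f (g y) := by
        gcongr
        exact lintegral_map_le _ _

section Trace

variable {F : Type*} [NormedAddCommGroup F] [NormedSpace ℝ F]

/-- The integrand `‖w‖ ^ P + h ^ P * ‖Dw‖ ^ P` of the `P`-th power of the scaled Sobolev norm on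
the right-hand side of the trace inequality. -/
def sobolevDensity {E : Type*} [NormedAddCommGroup E] [NormedSpace ℝ E] (P h : ℝ) (w : E → F)
    (x : E) : ℝ≥0∞ :=
  ‖w x‖ₑ ^ P + ENNReal.ofReal h ^ P * ‖fderiv ℝ w x‖ₑ ^ P

lemma measurable_indicator_sobolevDensity {E : Type*} [NormedAddCommGroup E] [NormedSpace ℝ E]
    [MeasurableSpace E] [BorelSpace E] {K : Set E} (hKc : IsClosed K) {P h : ℝ} (hP : 0 ≤ P)
    {w : E → F} (hw : ∀ x ∈ K, DifferentiableAt ℝ w x) (hw' : ContinuousOn (fderiv ℝ w) K) :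
    Measurable (K.indicator (sobolevDensity P h w)) := by
  classical
  have hwc : ContinuousOn w K := fun x hx => (hw x hx).continuousAt.continuousWithinAt
  have hcont : ContinuousOn (sobolevDensity P h w) K := by
    refine (ENNReal.continuous_rpow_const.comp_continuousOn hwc.enorm).add ?_
    exact (ENNReal.continuous_const_mul (by finiteness)).comp_continuousOn
      (ENNReal.continuous_rpow_const.comp_continuousOn hw'.enorm)
  rw [← Set.piecewise_eq_indicator]
  exact hcont.measurable_piecewise continuousOn_const hKc.measurableSet

lemma enorm_rpow_add_mul_enorm_fderiv_apply_rpow_le {E : Type*} [NormedAddCommGroup E]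
    [NormedSpace ℝ E] {P : ℝ} (hP : 0 ≤ P) {ℓ h : ℝ} {d : E} (hℓ : ℓ * ‖d‖ ≤ h) (w : E → F)
    (x : E) :
    ‖w x‖ₑ ^ P + ENNReal.ofReal ℓ ^ P * ‖fderiv ℝ w x d‖ₑ ^ P ≤ sobolevDensity P h w x := by
  have hspeed : ENNReal.ofReal ℓ * ‖fderiv ℝ w x d‖ₑ ≤ ENNReal.ofReal h * ‖fderiv ℝ w x‖ₑ :=
    calc ENNReal.ofReal ℓ * ‖fderiv ℝ w x d‖ₑ
        ≤ ENNReal.ofReal ℓ * (‖fderiv ℝ w x‖ₑ * ‖d‖ₑ) := by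
          gcongr
          exact ContinuousLinearMap.le_opENorm _ _
      _ = ENNReal.ofReal (ℓ * ‖d‖) * ‖fderiv ℝ w x‖ₑ := by
          rw [ENNReal.ofReal_mul' (norm_nonneg d), ofReal_norm]; ring
      _ ≤ ENNReal.ofReal h * ‖fderiv ℝ w x‖ₑ := by gcongr
  rw [sobolevDensity, ← ENNReal.mul_rpow_of_nonneg _ _ hP, ← ENNReal.mul_rpow_of_nonneg _ _ hP]
  exact add_le_add le_rfl (ENNReal.rpow_le_rpow hspeed hP)

lemma enorm_radialProjection_rpow_le {E : Type*} [NormedAddCommGroup E] [NormedSpace ℝ E]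
    {K : Set E} (hconv : Convex ℝ K) (hKc : IsClosed K) (hK : K ∈ nhds 0) {h : ℝ} (hh : 0 < h)
    (hKh : K ⊆ closedBall 0 h) {P : ℝ} (hP : 1 ≤ P)
    {w : E → F} (hw : ∀ x ∈ K, DifferentiableAt ℝ w x) (hw' : ContinuousOn (fderiv ℝ w) K)
    (n : ℕ) (d : E) :
    ENNReal.ofReal ((gauge K d)⁻¹ / 2) ^ (n + 1) * ‖w (radialProjection K d)‖ₑ ^ P ≤
      2 ^ (P - 1) * ∫⁻ t : ℝ, ‖t‖ₑ ^ n * K.indicator (sobolevDensity P h w) (t • d) := by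
  set s := (gauge K d)⁻¹
  have hs : 0 ≤ s := inv_nonneg.2 (gauge_nonneg d)
  set I := Set.Icc (s / 2) s
  have hnonneg : ∀ t ∈ I, 0 ≤ t := fun t ht => (by positivity : 0 ≤ s / 2).trans ht.1
  have hmem : ∀ t ∈ I, t • d ∈ K := fun t ht =>
    smul_mem_of_le_inv_gauge hconv hKc hK (hnonneg t ht) ht.2
  have hlength : s / 2 * ‖d‖ ≤ h :=
    (mul_le_mul_of_nonneg_right (half_le_self hs) (norm_nonneg d)).trans
      (inv_gauge_mul_norm_le hK hh hKh d)
  have hderiv : ∀ t ∈ I, HasDerivAt (fun t => w (t • d)) (fderiv ℝ w (t • d) d) t :=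
    fun t ht => (hw _ (hmem t ht)).hasFDerivAt.comp_hasDerivAt t
      (by simpa using (hasDerivAt_id t).smul_const d)
  have hderiv_cont : ContinuousOn (fun t : ℝ => fderiv ℝ w (t • d) d) I :=
    (hw'.comp (by fun_prop) hmem).clm_apply continuousOn_const
  have hray := length_mul_enorm_right_rpow_le hP hderiv hderiv_cont
  rw [sub_half] at hray
  have hweight : ∀ t ∈ I, ENNReal.ofReal (s / 2) ^ n *
      (‖w (t • d)‖ₑ ^ P + ENNReal.ofReal (s / 2) ^ P * ‖fderiv ℝ w (t • d) d‖ₑ ^ P) ≤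
      ‖t‖ₑ ^ n * K.indicator (sobolevDensity P h w) (t • d) := fun t ht => by
    rw [Set.indicator_of_mem (hmem t ht), Real.enorm_of_nonneg (hnonneg t ht)]
    exact mul_le_mul' (pow_le_pow_left' (ENNReal.ofReal_le_ofReal ht.1) n)
      (enorm_rpow_add_mul_enorm_fderiv_apply_rpow_le (zero_le_one.trans hP) hlength w _)
  calc ENNReal.ofReal (s / 2) ^ (n + 1) * ‖w (s • d)‖ₑ ^ P
      = ENNReal.ofReal (s / 2) ^ n * (ENNReal.ofReal (s / 2) * ‖w (s • d)‖ₑ ^ P) := by ring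
    _ ≤ ENNReal.ofReal (s / 2) ^ n * (2 ^ (P - 1) * ∫⁻ t in I, (‖w (t • d)‖ₑ ^ P +
          ENNReal.ofReal (s / 2) ^ P * ‖fderiv ℝ w (t • d) d‖ₑ ^ P)) := by gcongr
    _ = 2 ^ (P - 1) * ∫⁻ t in I, ENNReal.ofReal (s / 2) ^ n * (‖w (t • d)‖ₑ ^ P +
          ENNReal.ofReal (s / 2) ^ P * ‖fderiv ℝ w (t • d) d‖ₑ ^ P) := by
      rw [lintegral_const_mul' _ _ (by finiteness), mul_left_comm]
    _ ≤ 2 ^ (P - 1) * ∫⁻ t : ℝ, ‖t‖ₑ ^ n * K.indicator (sobolevDensity P h w) (t • d) :=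
      mul_le_mul_right ((setLIntegral_mono' measurableSet_Icc hweight).trans
        (setLIntegral_le_lintegral _ _)) _

section Euclidean

variable {M : ℕ} {K T : Set (EuclideanSpace ℝ (Fin (M + 1)))} {r h P : ℝ}
  {w : EuclideanSpace ℝ (Fin (M + 1)) → F} {x₀ : EuclideanSpace ℝ (Fin (M + 1))}

lemma lipschitzWith_radialProjection_cubeFace (hconv : Convex ℝ K) (hr : 0 < r)
    (hK : ball 0 r ⊆ K) (hh : 0 < h) (hKh : K ⊆ closedBall 0 h) (i : Fin (M + 1)) (σ : ℤˣ) :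
    LipschitzWith ((h + h ^ 2 / r) * √(M + 1)).toNNReal
      fun y => radialProjection K (cubeFace i σ y) := by
  rw [Real.toNNReal_mul (by positivity), ← lipschitzOnWith_univ]
  exact (lipschitzOnWith_radialProjection hconv hr hK hh hKh).comp
    (lipschitzWith_cubeFace i σ).lipschitzOnWith fun y _ => one_le_norm_cubeFace i σ y

lemma div_sqrt_le_inv_gauge_cubeFace (hr : 0 < r) (hK : ball 0 r ⊆ K) (hh : 0 < h)
    (hKh : K ⊆ closedBall 0 h) (i : Fin (M + 1)) (σ : ℤˣ) {y : Fin M → ℝ}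
    (hy : y ∈ Set.Icc (-1 : Fin M → ℝ) 1) : r / √(M + 1) ≤ (gauge K (cubeFace i σ y))⁻¹ := by
  have hpos : 0 < gauge K (cubeFace i σ y) :=
    gauge_pos_of_one_le_norm (Filter.mem_of_superset (ball_mem_nhds 0 hr) hK) hh hKh
      (one_le_norm_cubeFace i σ y)
  rw [div_le_iff₀ (by positivity), inv_mul_eq_div, le_div_iff₀ hpos]
  exact (mul_gauge_le_norm hK).trans (norm_cubeFace_le i σ hy)

lemma setLIntegral_image_cubeFace_le (hconv : Convex ℝ K) (hKc : IsClosed K) (hr : 0 < r)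
    (hK : ball 0 r ⊆ K) (hh : 0 < h) (hKh : K ⊆ closedBall 0 h) (hP : 1 ≤ P)
    (hw : ∀ x ∈ K, DifferentiableAt ℝ w x) (hw' : ContinuousOn (fderiv ℝ w) K)
    (i : Fin (M + 1)) (σ : ℤˣ) :
    ENNReal.ofReal (r / √(M + 1) / 2) ^ (M + 1) *
        ∫⁻ x in (fun y => radialProjection K (cubeFace i σ y)) '' Set.Icc (-1) 1,
          ‖w x‖ₑ ^ P ∂μH[M] ≤
      ENNReal.ofReal ((h + h ^ 2 / r) * √(M + 1)) ^ M *
        (2 ^ (P - 1) * ∫⁻ x in K, sobolevDensity P h w x) := by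
  set a := ENNReal.ofReal (r / √(M + 1) / 2) ^ (M + 1)
  set L := ENNReal.ofReal ((h + h ^ 2 / r) * √(M + 1))
  set G := K.indicator (sobolevDensity P h w)
  have hG : Measurable G := measurable_indicator_sobolevDensity hKc (by positivity) hw hw'
  have hray : ∀ y ∈ Set.Icc (-1 : Fin M → ℝ) 1,
      a * ‖w (radialProjection K (cubeFace i σ y))‖ₑ ^ P ≤
        2 ^ (P - 1) * ∫⁻ t : ℝ, ‖t‖ₑ ^ M * G (t • cubeFace i σ y) := fun y hy => by
    have hscale : a ≤ ENNReal.ofReal ((gauge K (cubeFace i σ y))⁻¹ / 2) ^ (M + 1) := by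
      unfold a
      gcongr
      exact div_sqrt_le_inv_gauge_cubeFace hr hK hh hKh i σ hy
    exact (mul_le_mul_left hscale _).trans <| enorm_radialProjection_rpow_le hconv hKc
      (Filter.mem_of_superset (ball_mem_nhds 0 hr) hK) hh hKh hP hw hw' M _
  have himage := setLIntegral_hausdorffMeasure_image_le
    (lipschitzWith_radialProjection_cubeFace hconv hr hK hh hKh i σ) (Set.Icc (-1) 1)
    fun x => ‖w x‖ₑ ^ P
  rw [Fintype.card_fin] at himage
  calc a * ∫⁻ x in (fun y => radialProjection K (cubeFace i σ y)) '' Set.Icc (-1) 1,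
          ‖w x‖ₑ ^ P ∂μH[M]
      ≤ a * (L ^ M * ∫⁻ y in Set.Icc (-1) 1,
          ‖w (radialProjection K (cubeFace i σ y))‖ₑ ^ P) := mul_le_mul_right himage _
    _ = L ^ M * ∫⁻ y in Set.Icc (-1) 1,
          a * ‖w (radialProjection K (cubeFace i σ y))‖ₑ ^ P := by
      rw [lintegral_const_mul' _ _ (by finiteness), mul_left_comm]
    _ ≤ L ^ M * ∫⁻ y in Set.Icc (-1) 1,
          2 ^ (P - 1) * ∫⁻ t : ℝ, ‖t‖ₑ ^ M * G (t • cubeFace i σ y) :=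
      mul_le_mul_right (setLIntegral_mono' measurableSet_Icc hray) _
    _ ≤ L ^ M * (2 ^ (P - 1) * ∫⁻ y, ∫⁻ t : ℝ, ‖t‖ₑ ^ M * G (t • cubeFace i σ y)) := by
      rw [lintegral_const_mul' _ _ (by finiteness)]
      exact mul_le_mul_right (mul_le_mul_right (setLIntegral_le_lintegral _ _) _) _
    _ = L ^ M * (2 ^ (P - 1) * ∫⁻ x in K, sobolevDensity P h w x) := by
      rw [lintegral_lintegral_enorm_pow_mul_smul_cubeFace i σ hG,
        lintegral_indicator hKc.measurableSet]

lemma frontier_subset_iUnion_image_cubeFace (hconv : Convex ℝ K) (hK : K ∈ nhds 0) :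
    frontier K ⊆ ⋃ q : Fin (M + 1) × ℤˣ,
      (fun y => radialProjection K (cubeFace q.1 q.2 y)) '' Set.Icc (-1) 1 := fun x hx => by
  have hx0 : x ≠ 0 := by
    rintro rfl
    exact hx.2 (mem_interior_iff_mem_nhds.2 hK)
  obtain ⟨c, hc, i, σ, y, hy, hxy⟩ := exists_smul_eq_cubeFace hx0
  refine Set.mem_iUnion.2 ⟨(i, σ), y, hy, ?_⟩
  rw [← radialProjection_smul_of_mem_frontier hconv hK hx hc, hxy]

/-- The constant in the trace inequality for convex sets between `ball x₀ r` and
`closedBall x₀ h` in dimension `M + 1`: the cube has `2 * (M + 1)` faces, each parametrizes its part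
of the frontier with Lipschitz constant `(h + h ^ 2 / r) * √(M + 1)`, and the ray `t ↦ t • d`
through a point `d` of a face is integrated over `t ≥ r / √(M + 1) / 2`, against the Jacobian
`|t| ^ M` of cone coordinates. -/
def traceConst (M : ℕ) (P r h : ℝ) : ℝ :=
  2 * (M + 1) * (((h + h ^ 2 / r) * √(M + 1)) ^ M * 2 ^ (P - 1)) / (r / √(M + 1) / 2) ^ (M + 1)

lemma traceConst_pos (M : ℕ) (P : ℝ) (hr : 0 < r) (hh : 0 < h) : 0 < traceConst M P r h := by
  unfold traceConst
  positivity

lemma ofReal_traceConst (M : ℕ) (P : ℝ) (hr : 0 < r) (hh : 0 < h) :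
    ENNReal.ofReal (traceConst M P r h) =
      2 * (M + 1) * (ENNReal.ofReal ((h + h ^ 2 / r) * √(M + 1)) ^ M * 2 ^ (P - 1)) /
        ENNReal.ofReal (r / √(M + 1) / 2) ^ (M + 1) := by
  have hcard : ENNReal.ofReal (2 * (M + 1)) = 2 * (M + 1) := by
    rw [ENNReal.ofReal_mul zero_le_two, ENNReal.ofReal_ofNat, ← Nat.cast_add_one,
      ENNReal.ofReal_natCast, Nat.cast_add_one]
  rw [traceConst, ENNReal.ofReal_div_of_pos (by positivity),
    ENNReal.ofReal_mul (p := 2 * ((M : ℝ) + 1)) (by positivity), hcard,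
    ENNReal.ofReal_mul (by positivity), ENNReal.ofReal_pow (by positivity),
    ENNReal.ofReal_pow (by positivity), ← ENNReal.ofReal_rpow_of_pos two_pos, ENNReal.ofReal_ofNat]

lemma mul_traceConst_mul (M : ℕ) (P : ℝ) (hr : 0 < r) (hh : 0 < h) :
    h * traceConst M P (r * h) h = traceConst M P r 1 := by
  have hLip : (h + h ^ 2 / (r * h)) * √(M + 1) = (1 + 1 ^ 2 / r) * √(M + 1) * h := by
    field_simp
  have hradius : r * h / √(M + 1) / 2 = r / √(M + 1) / 2 * h := by ring
  rw [traceConst, traceConst, hLip, hradius, mul_pow _ h M, mul_pow _ h (M + 1), pow_succ h]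
  field_simp

lemma setLIntegral_frontier_le_of_ball_zero_subset (hconv : Convex ℝ K) (hKc : IsClosed K)
    (hr : 0 < r) (hK : ball 0 r ⊆ K) (hh : 0 < h) (hKh : K ⊆ closedBall 0 h) (hP : 1 ≤ P)
    (hw : ∀ x ∈ K, DifferentiableAt ℝ w x) (hw' : ContinuousOn (fderiv ℝ w) K) :
    ∫⁻ x in frontier K, ‖w x‖ₑ ^ P ∂μH[M] ≤
      ENNReal.ofReal (traceConst M P r h) * ∫⁻ x in K, sobolevDensity P h w x := by
  set Φ : Fin (M + 1) × ℤˣ → Set (EuclideanSpace ℝ (Fin (M + 1))) := fun q =>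
    (fun y => radialProjection K (cubeFace q.1 q.2 y)) '' Set.Icc (-1) 1
  have hcover : frontier K ⊆ ⋃ q, Φ q := frontier_subset_iUnion_image_cubeFace hconv
    (Filter.mem_of_superset (ball_mem_nhds 0 hr) hK)
  set a := ENNReal.ofReal (r / √(M + 1) / 2) ^ (M + 1)
  have ha : a ≠ 0 := pow_ne_zero _ (ENNReal.ofReal_pos.2 (by positivity)).ne'
  rw [ofReal_traceConst M P hr hh, ← ENNReal.mul_div_right_comm,
    ENNReal.le_div_iff_mul_le (.inl ha) (.inl (by finiteness)), mul_comm]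
  calc a * ∫⁻ x in frontier K, ‖w x‖ₑ ^ P ∂μH[M]
      ≤ a * ∑ q, ∫⁻ x in Φ q, ‖w x‖ₑ ^ P ∂μH[M] :=
        mul_le_mul_right ((lintegral_mono_set hcover).trans
          ((lintegral_iUnion_le _ _).trans_eq (tsum_fintype _))) _
    _ ≤ ∑ _q : Fin (M + 1) × ℤˣ, ENNReal.ofReal ((h + h ^ 2 / r) * √(M + 1)) ^ M *
          (2 ^ (P - 1) * ∫⁻ x in K, sobolevDensity P h w x) := by
        rw [Finset.mul_sum]
        exact Finset.sum_le_sum fun q _ =>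
          setLIntegral_image_cubeFace_le hconv hKc hr hK hh hKh hP hw hw' q.1 q.2
    _ = _ := by
        rw [Finset.sum_const, nsmul_eq_mul, Finset.card_univ, Fintype.card_prod, Fintype.card_fin,
          Fintype.card_units_int, Nat.cast_mul, Nat.cast_add_one, Nat.cast_ofNat,
          mul_comm (2 : ℝ≥0∞)]
        ring

lemma setLIntegral_frontier_le_of_ball_subset_of_subset_closedBall (hconv : Convex ℝ K)
    (hKc : IsClosed K) (hr : 0 < r) (hK : ball x₀ r ⊆ K) (hh : 0 < h)
    (hKh : K ⊆ closedBall x₀ h) (hP : 1 ≤ P)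
    (hw : ∀ x ∈ K, DifferentiableAt ℝ w x) (hw' : ContinuousOn (fderiv ℝ w) K) :
    ∫⁻ x in frontier K, ‖w x‖ₑ ^ P ∂μH[M] ≤
      ENNReal.ofReal (traceConst M P r h) * ∫⁻ x in K, sobolevDensity P h w x := by
  set e := IsometryEquiv.addLeft x₀
  have hfderiv : fderiv ℝ (fun x => w (x₀ + x)) = fun x => fderiv ℝ w (x₀ + x) :=
    funext fun x => fderiv_comp_add_left x₀
  have hdiff : ∀ x ∈ e ⁻¹' K, DifferentiableAt ℝ (fun x => w (x₀ + x)) x := fun x hx =>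
    (differentiableAt_comp_add_left x₀).2 (hw _ hx)
  have hcont : ContinuousOn (fderiv ℝ fun x => w (x₀ + x)) (e ⁻¹' K) :=
    hfderiv ▸ hw'.comp (by fun_prop) fun x hx => hx
  have htranslated := setLIntegral_frontier_le_of_ball_zero_subset (K := e ⁻¹' K)
    (hconv.translate_preimage_right x₀) (hKc.preimage e.continuous) hr
    (by simpa [e] using Set.preimage_mono (f := e) hK) hh
    (by simpa [e] using Set.preimage_mono (f := e) hKh) hP hdiff hcont
  have hfrontier : ∫⁻ x in frontier (e ⁻¹' K), ‖w (x₀ + x)‖ₑ ^ P ∂μH[M] =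
      ∫⁻ x in frontier K, ‖w x‖ₑ ^ P ∂μH[M] :=
    e.toHomeomorph.preimage_frontier K ▸
      (e.measurePreserving_hausdorffMeasure M).setLIntegral_comp_preimage_emb
        e.toHomeomorph.measurableEmbedding (fun x => ‖w x‖ₑ ^ P) (frontier K)
  have hinterior : ∫⁻ x in e ⁻¹' K, sobolevDensity P h (fun x => w (x₀ + x)) x =
      ∫⁻ x in K, sobolevDensity P h w x := by
    simp only [sobolevDensity, hfderiv]
    exact (measurePreserving_add_left volume x₀).setLIntegral_comp_preimage_emb
      e.toHomeomorph.measurableEmbedding (sobolevDensity P h w) K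
  rwa [hinterior, hfrontier] at htranslated

lemma setLIntegral_frontier_le_of_ball_subset (hconv : Convex ℝ T) (hbdd : Bornology.IsBounded T)
    (hr : 0 < r) (hT : ball x₀ r ⊆ T) (hd : 0 < diam T) (hP : 1 ≤ P)
    (hw : ∀ x ∈ closure T, DifferentiableAt ℝ w x)
    (hw' : ContinuousOn (fderiv ℝ w) (closure T)) :
    ∫⁻ x in frontier T, ‖w x‖ₑ ^ P ∂μH[M] ≤
      ENNReal.ofReal (traceConst M P r (diam T)) * ∫⁻ x in T, sobolevDensity P (diam T) w x := by
  have hx₀ : x₀ ∈ T := hT (mem_ball_self hr)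
  have hTd : closure T ⊆ closedBall x₀ (diam T) :=
    closure_minimal (fun x hx => dist_le_diam_of_mem hbdd hx hx₀) isClosed_closedBall
  have hinterior : (interior T).Nonempty :=
    ⟨x₀, mem_interior_iff_mem_nhds.2 (Filter.mem_of_superset (ball_mem_nhds x₀ hr) hT)⟩
  have hfrontier : frontier (closure T) = frontier T := by
    rw [frontier, frontier, closure_closure,
      hconv.interior_closure_eq_interior_of_nonempty_interior hinterior]
  have hvolume : volume.restrict (closure T) = volume.restrict T :=
    Measure.restrict_congr_set (closure_ae_eq_of_null_frontier (hconv.addHaar_frontier volume))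
  simpa only [hfrontier, hvolume] using
    setLIntegral_frontier_le_of_ball_subset_of_subset_closedBall hconv.closure isClosed_closure hr
      (hT.trans subset_closure) hd hTd hP hw hw'

lemma diam_mul_setLIntegral_frontier_le {ϱ : ℝ} (hϱ : 0 < ϱ) (hconv : Convex ℝ T)
    (hbdd : Bornology.IsBounded T) (hd : 0 < diam T)
    (hsSup : ϱ * diam T ≤ sSup {r : ℝ | ∃ x, ball x r ⊆ T}) (hP : 1 ≤ P)
    (hw : ∀ x ∈ closure T, DifferentiableAt ℝ w x)
    (hw' : ContinuousOn (fderiv ℝ w) (closure T)) :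
    ENNReal.ofReal (diam T) * ∫⁻ x in frontier T, ‖w x‖ₑ ^ P ∂μH[M] ≤
      ENNReal.ofReal (traceConst M P (ϱ / 2) 1) *
        ∫⁻ x in T, sobolevDensity P (diam T) w x := by
  have hlt : ϱ / 2 * diam T < sSup {r : ℝ | ∃ x, ball x r ⊆ T} :=
    (mul_lt_mul_of_pos_right (half_lt_self hϱ) hd).trans_le hsSup
  obtain ⟨r, ⟨x₀, hball⟩, hr⟩ : ∃ r ∈ {r : ℝ | ∃ x, ball x r ⊆ T}, ϱ / 2 * diam T < r :=
    exists_lt_of_lt_csSup ⟨0, 0, by simp⟩ hlt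
  rw [← mul_traceConst_mul M P (half_pos hϱ) hd, ENNReal.ofReal_mul hd.le, mul_assoc]
  gcongr
  exact setLIntegral_frontier_le_of_ball_subset hconv hbdd (by positivity)
    ((ball_subset_ball hr.le).trans hball) hd hP hw hw'

end Euclidean

lemma eLpNorm_gradient {𝕜 E : Type*} [RCLike 𝕜] [NormedAddCommGroup E] [InnerProductSpace 𝕜 E]
    [CompleteSpace E] {_ : MeasurableSpace E} (w : E → 𝕜) (p : ℝ≥0∞) (μ : Measure E) :
    eLpNorm (gradient w) p μ = eLpNorm (fderiv 𝕜 w) p μ :=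
  eLpNorm_congr_norm_ae (.of_forall fun x => by simp [gradient])

end Trace

lemma rpow_mul_eLpNorm_le_of_mul_lintegral_le {α β F G H : Type*} [MeasurableSpace α]
    [MeasurableSpace β] [NormedAddCommGroup F] [NormedAddCommGroup G] [NormedAddCommGroup H]
    {μ : Measure α} {ν : Measure β} {f : α → F} {g : β → G} {g' : β → H} {p c C : ℝ≥0∞}
    (hp : 1 ≤ p) (hp' : p ≠ ⊤) (hc : c ≠ ⊤) (hg : AEStronglyMeasurable g ν)
    (hle : c * ∫⁻ x, ‖f x‖ₑ ^ p.toReal ∂μ ≤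
      C * ∫⁻ x, (‖g x‖ₑ ^ p.toReal + c ^ p.toReal * ‖g' x‖ₑ ^ p.toReal) ∂ν) :
    c ^ (1 / p.toReal) * eLpNorm f p μ ≤
      C ^ (1 / p.toReal) * (eLpNorm g p ν + c * eLpNorm g' p ν) := by
  have hp0 : p ≠ 0 := (one_pos.trans_le hp).ne'
  have hP : 1 ≤ p.toReal := by simpa using ENNReal.toReal_mono hp' hp
  have hP0 : 0 < p.toReal := one_pos.trans_le hP
  have hroot : 0 ≤ 1 / p.toReal := by positivity
  have hcancel : ∀ a : ℝ≥0∞, (a ^ p.toReal) ^ (1 / p.toReal) = a := fun a => by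
    rw [one_div, ENNReal.rpow_rpow_inv hP0.ne']
  rw [lintegral_add_left' (hg.enorm.pow_const _), lintegral_const_mul' _ _ (by finiteness)] at hle
  simp only [lintegral_rpow_enorm_eq_rpow_eLpNorm' hP0, ← eLpNorm_eq_eLpNorm' hp0 hp'] at hle
  calc c ^ (1 / p.toReal) * eLpNorm f p μ
      = (c * eLpNorm f p μ ^ p.toReal) ^ (1 / p.toReal) := by
        rw [ENNReal.mul_rpow_of_nonneg _ _ hroot, hcancel]
    _ ≤ (C * (eLpNorm g p ν ^ p.toReal + c ^ p.toReal * eLpNorm g' p ν ^ p.toReal)) ^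
          (1 / p.toReal) := ENNReal.rpow_le_rpow hle hroot
    _ ≤ (C * (eLpNorm g p ν + c * eLpNorm g' p ν) ^ p.toReal) ^ (1 / p.toReal) := by
        rw [← ENNReal.mul_rpow_of_nonneg _ _ hP0.le]
        gcongr
        exact ENNReal.add_rpow_le_rpow_add _ _ hP
    _ = C ^ (1 / p.toReal) * (eLpNorm g p ν + c * eLpNorm g' p ν) := by
        rw [ENNReal.mul_rpow_of_nonneg _ _ hroot, hcancel]

theorem continuous_trace_inequality_simplex_general {F : Type*} [NormedAddCommGroup F]
    [NormedSpace ℝ F] (N : ℕ) (hN : 1 ≤ N) (p : ℝ≥0∞) (hp : 1 ≤ p) (hp' : p ≠ ⊤) (ϱ : ℝ)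
    (hϱ : 0 < ϱ) :
    ∃ C : ℝ, 0 < C ∧ ∀ T : Set (EuclideanSpace ℝ (Fin N)), Convex ℝ T → Bornology.IsBounded T →
      ϱ * diam T ≤ sSup {r : ℝ | ∃ x, ball x r ⊆ T} →
      ∀ w : EuclideanSpace ℝ (Fin N) → F, (∀ x ∈ closure T, DifferentiableAt ℝ w x) →
      ContinuousOn (fderiv ℝ w) (closure T) →
        ENNReal.ofReal (diam T ^ (1 / p.toReal)) *
            eLpNorm w p ((μH[(N : ℝ) - 1]).restrict (frontier T)) ≤
          ENNReal.ofReal C * (eLpNorm w p (volume.restrict T) +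
            ENNReal.ofReal (diam T) * eLpNorm (fderiv ℝ w) p (volume.restrict T)) := by
  obtain ⟨M, rfl⟩ : ∃ M, N = M + 1 := ⟨N - 1, by omega⟩
  have hP : 1 ≤ p.toReal := by simpa using ENNReal.toReal_mono hp' hp
  have hconst := traceConst_pos M p.toReal (half_pos hϱ) one_pos
  refine ⟨traceConst M p.toReal (ϱ / 2) 1 ^ (1 / p.toReal), by positivity,
    fun T hconv hbdd hsSup w hw hw' => ?_⟩
  rcases (diam_nonneg (s := T)).eq_or_lt' with hd | hd
  · simp [hd, (one_pos.trans_le hP).ne']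
  have hmeas : AEStronglyMeasurable w (volume.restrict T) :=
    (ContinuousOn.aestronglyMeasurable
      (fun x hx => (hw x hx).continuousAt.continuousWithinAt) measurableSet_closure).mono_measure
      (Measure.restrict_mono subset_closure le_rfl)
  rw [← ENNReal.ofReal_rpow_of_pos hd, ← ENNReal.ofReal_rpow_of_pos hconst, Nat.cast_add_one,
    add_sub_cancel_right]
  exact rpow_mul_eLpNorm_le_of_mul_lintegral_le hp hp' ENNReal.ofReal_ne_top hmeas
    (diam_mul_setLIntegral_frontier_le hϱ hconv hbdd hd hsSup hP hw hw')

/-- Continuous trace inequality on nondegenerate simplices: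
`h_T^{1/p} ‖w‖_{L^p(∂T)} ≤ C (‖w‖_{L^p(T)} + h_T ‖∇w‖_{L^p(T)})`. -/
theorem continuous_trace_inequality_simplex
    (N : ℕ) (hN : 1 ≤ N) (p : ℝ≥0∞) (hp : 1 ≤ p) (hp' : p ≠ ⊤) (ϱ : ℝ) (hϱ : 0 < ϱ) :
    ∃ C : ℝ, 0 < C ∧
      ∀ (f : Fin (N + 1) → EuclideanSpace ℝ (Fin N)), AffineIndependent ℝ f →
      ∀ T : Set (EuclideanSpace ℝ (Fin N)),
        T = interior (convexHull ℝ (Set.range f)) →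
        ϱ * Metric.diam T ≤ sSup {r : ℝ | ∃ x, Metric.ball x r ⊆ T} →
      ∀ (w : EuclideanSpace ℝ (Fin N) → ℝ) (V : Set (EuclideanSpace ℝ (Fin N))),
        IsOpen V → closure T ⊆ V → ContDiffOn ℝ 1 w V →
        ENNReal.ofReal (Metric.diam T ^ (1 / p.toReal)) *
            eLpNorm w p ((μH[(N : ℝ) - 1]).restrict (frontier T))
          ≤ ENNReal.ofReal C *
            (eLpNorm w p (volume.restrict T) +
              ENNReal.ofReal (Metric.diam T) *
                eLpNorm (fun x => gradient w x) p (volume.restrict T)) := by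
  obtain ⟨C, hC, htrace⟩ :=
    continuous_trace_inequality_simplex_general (F := ℝ) N hN p hp hp' ϱ hϱ
  refine ⟨C, hC, fun f _ T hT hsSup w V hV hTV hw => ?_⟩
  have hconv : Convex ℝ T := hT ▸ (convex_convexHull ℝ _).interior
  have hbdd : Bornology.IsBounded T := hT ▸
    (isBounded_convexHull.2 (Set.finite_range f).isBounded).subset interior_subset
  rw [eLpNorm_gradient]
  exact htrace T hconv hbdd hsSup w
    (fun x hx => (hw.differentiableOn one_ne_zero).differentiableAt (hV.mem_nhds (hTV hx)))
    ((hw.continuousOn_fderiv_of_isOpen hV le_rfl).mono hTV)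
end
end

section
/- For every dimension N ≥ 1, every degree k ∈ ℕ, every s ∈ {1, …, k+1}, every exponent p ∈ [1, +∞), and every ϱ > 0, there exists a constant C > 0 depending only on N, ϱ, k, s and p such that: for every nondegenerate simplex T ⊆ ℝ^N with diameter h_T and inradius r_T satisfying ϱ·h_T ≤ r_T, every function v smooth on an open neighbourhood of the closure of T, and every m ∈ {0, …, s−1}, one has h_T^{1/p} · ‖ x ↦ ‖D^m(v − π_T^k v)(x)‖ ‖_{L^p(∂T, μ)} ≤ C · h_T^{s−m} · |v|_{W^{s,p}(T)}, where π_T^k v is the L^2-projection of v onto polynomials of total degree at most k and μ is the (N−1)-dimensional Hausdorff measure on the topological boundary ∂T. -/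
open MeasureTheory Metric
open scoped ENNReal

noncomputable section

/-- `w : ℝ^N → ℝ` is (given by) a multivariate polynomial of total degree at most `k`. -/
def IsPolyDegLE (N k : ℕ) (w : EuclideanSpace ℝ (Fin N) → ℝ) : Prop :=
  ∃ P : MvPolynomial (Fin N) ℝ, P.totalDegree ≤ k ∧ ∀ x, w x = MvPolynomial.eval (fun i => x i) P

/-- The `W^{s,p}(U)`-seminorm of `v`: the `L^p(U)`-norm of the norm of the `s`-th iterated
derivative. -/
def sobSemi {N : ℕ} (s : ℕ) (p : ℝ≥0∞) (U : Set (EuclideanSpace ℝ (Fin N)))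
    (v : EuclideanSpace ℝ (Fin N) → ℝ) : ℝ≥0∞ :=
  eLpNorm (fun x => ‖iteratedFDeriv ℝ s v x‖) p (volume.restrict U)

/-!
Each boundary point `y` of a simplex lies on a face; let `a` be the opposite vertex. Averaging the
fundamental theorem of calculus over the half segment from `y` towards `a` bounds `‖g y‖` by `g` and
its derivative on that half segment. As `y` runs over the face, the half segments sweep out part of
the simplex with Jacobian bounded below, so `‖g‖_{L^p(∂T)}` is at most a constant times
`‖g‖_{L^p(T)} + ‖Dg‖_{L^p(T)}`.

For `g = D^m (v - π v)` this reduces the theorem to interior estimates. Subtracting from `v`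
polynomials that cancel its `j`-th derivative at a well-chosen point, for `j = s - 1, …, 0`, and
applying Poincaré's inequality each time, gives `Q` of degree less than `s` with
`|v - Q|_{W^{j,p}}` at most a constant times `|v|_{W^{s,p}}`. Since `π` fixes `Q` and, having
finite-dimensional range, is bounded from `L^p` to every `W^{j,p}`, the identity
`v - π v = (v - Q) - π (v - Q)` gives the same bound for `v - π v`.

Finally `L²`-projections commute with affine maps. The affine map from a fixed reference simplex
onto `T` has Lipschitz constant of order `h_T`, its inverse of order `1 / (ϱ h_T)`, and scaling
turns the estimate on the reference simplex into the factor `h_T ^ (s - m) / h_T ^ (1 / p)`.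
-/

open scoped NNReal

section Segments

variable {E F : Type*} [NormedAddCommGroup E] [NormedSpace ℝ E] [NormedAddCommGroup F]
  [NormedSpace ℝ F] {g : E → F} {q : ℝ}

lemma rpow_lintegral_le_lintegral_rpow {α : Type*} [MeasurableSpace α] {μ : Measure α}
    (hμ : μ Set.univ ≤ 1) (hq : 1 ≤ q) {f : α → ℝ≥0∞} (hf : Measurable f) :
    (∫⁻ x, f x ∂μ) ^ q ≤ ∫⁻ x, f x ^ q ∂μ := by
  have hq0 : 0 < q := zero_lt_one.trans_le hq
  have hexp : 0 ≤ 1 - 1 / q := sub_nonneg.2 ((div_le_one hq0).2 hq)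
  have hL1 : ∫⁻ x, f x ∂μ ≤ (∫⁻ x, f x ^ q ∂μ) ^ (1 / q) := by
    have hle := eLpNorm'_le_eLpNorm'_mul_rpow_measure_univ one_pos hq hf.aestronglyMeasurable
      (μ := μ)
    simp only [eLpNorm', enorm_eq_self, ENNReal.rpow_one, one_div_one] at hle
    exact hle.trans (mul_le_of_le_one_right' (ENNReal.rpow_le_one hμ hexp))
  calc (∫⁻ x, f x ∂μ) ^ q ≤ ((∫⁻ x, f x ^ q ∂μ) ^ (1 / q)) ^ q := by gcongr
    _ = ∫⁻ x, f x ^ q ∂μ := by rw [← ENNReal.rpow_mul, one_div_mul_cancel hq0.ne', ENNReal.rpow_one]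

lemma enorm_sub_le_lintegral_fderiv_segment (hg : ContDiff ℝ 1 g) (x y : E) {t : ℝ} (ht : 0 ≤ t) :
    ‖g (y + t • (x - y)) - g y‖ₑ ≤
      ∫⁻ τ in Set.Icc 0 t, edist x y * ‖fderiv ℝ g (y + τ • (x - y))‖ₑ := by
  set γ : ℝ → E := fun τ => y + τ • (x - y) with hγ
  have hγ' (τ : ℝ) : HasDerivAt γ (x - y) τ := by
    simpa [hγ] using ((hasDerivAt_id τ).smul_const (x - y)).const_add y
  have hderiv (τ : ℝ) : deriv (g ∘ γ) τ = fderiv ℝ g (γ τ) (x - y) :=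
    ((hg.differentiable one_ne_zero (γ τ)).hasFDerivAt.comp_hasDerivAt τ (hγ' τ)).deriv
  have hcomp : ContDiff ℝ 1 (g ∘ γ) := hg.comp (by fun_prop)
  have hftc := enorm_sub_le_lintegral_deriv_of_contDiffOn_Icc hcomp.contDiffOn ht
  simp only [hderiv] at hftc
  refine (le_of_eq (by simp [hγ])).trans (hftc.trans (lintegral_mono fun τ => ?_))
  rw [edist_eq_enorm_sub, mul_comm]
  exact ContinuousLinearMap.le_opENorm _ _

lemma rpow_enorm_sub_le_lintegral_segment (hg : ContDiff ℝ 1 g) (hq : 1 ≤ q) (x y : E) :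
    ‖g x - g y‖ₑ ^ q ≤
      ∫⁻ τ in Set.Icc (0 : ℝ) 1, (edist x y * ‖fderiv ℝ g (y + τ • (x - y))‖ₑ) ^ q := by
  have : Continuous (fderiv ℝ g) := hg.continuous_fderiv one_ne_zero
  have hnorm : Measurable fun τ : ℝ => ‖fderiv ℝ g (y + τ • (x - y))‖ₑ :=
    Continuous.measurable (by fun_prop)
  have hftc := enorm_sub_le_lintegral_fderiv_segment hg x y zero_le_one
  rw [one_smul, add_sub_cancel] at hftc
  exact (ENNReal.rpow_le_rpow hftc (by positivity)).trans
    (rpow_lintegral_le_lintegral_rpow (by simp) hq (hnorm.const_mul _))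

lemma rpow_enorm_le_lintegral_segment (hg : ContDiff ℝ 1 g) (hq : 1 ≤ q) (x y : E) :
    ‖g y‖ₑ ^ q ≤ ∫⁻ τ in Set.Icc (0 : ℝ) (1 / 2),
      (2 * ‖g (y + τ • (x - y))‖ₑ + edist x y * ‖fderiv ℝ g (y + τ • (x - y))‖ₑ) ^ q := by
  have hgc : Continuous g := hg.continuous
  have : Continuous (fderiv ℝ g) := hg.continuous_fderiv one_ne_zero
  have hnorm : Measurable fun τ : ℝ => 2 * ‖g (y + τ • (x - y))‖ₑ :=
    (Continuous.measurable (by fun_prop)).const_mul 2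
  have hnorm' : Measurable fun τ : ℝ => edist x y * ‖fderiv ℝ g (y + τ • (x - y))‖ₑ :=
    (Continuous.measurable (by fun_prop)).const_mul _
  set J := ∫⁻ τ in Set.Icc (0 : ℝ) (1 / 2), edist x y * ‖fderiv ℝ g (y + τ • (x - y))‖ₑ with hJ
  have hvol : volume (Set.Icc (0 : ℝ) (1 / 2)) = 2⁻¹ := by
    rw [Real.volume_Icc, sub_zero, one_div, ENNReal.ofReal_inv_of_pos two_pos, ENNReal.ofReal_ofNat]
  have hcancel (a : ℝ≥0∞) : ∫⁻ _ in Set.Icc (0 : ℝ) (1 / 2), 2 * a = a := by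
    rw [setLIntegral_const, hvol, mul_right_comm, ENNReal.mul_inv_cancel two_ne_zero (by simp),
      one_mul]
  have hpoint (t : ℝ) (ht : t ∈ Set.Icc (0 : ℝ) (1 / 2)) :
      2 * ‖g y‖ₑ ≤ 2 * ‖g (y + t • (x - y))‖ₑ + 2 * J := by
    rw [← mul_add]
    gcongr
    calc ‖g y‖ₑ = ‖g (y + t • (x - y)) - (g (y + t • (x - y)) - g y)‖ₑ := by rw [sub_sub_cancel]
      _ ≤ ‖g (y + t • (x - y))‖ₑ + ‖g (y + t • (x - y)) - g y‖ₑ := enorm_sub_le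
      _ ≤ ‖g (y + t • (x - y))‖ₑ + J := by
          gcongr
          exact (enorm_sub_le_lintegral_fderiv_segment hg x y ht.1).trans
            (lintegral_mono_set (Set.Icc_subset_Icc_right ht.2))
  have hmean : ‖g y‖ₑ ≤ ∫⁻ τ in Set.Icc (0 : ℝ) (1 / 2),
      (2 * ‖g (y + τ • (x - y))‖ₑ + edist x y * ‖fderiv ℝ g (y + τ • (x - y))‖ₑ) := by
    calc ‖g y‖ₑ = ∫⁻ _ in Set.Icc (0 : ℝ) (1 / 2), 2 * ‖g y‖ₑ := (hcancel _).symm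
      _ ≤ ∫⁻ t in Set.Icc (0 : ℝ) (1 / 2), (2 * ‖g (y + t • (x - y))‖ₑ + 2 * J) :=
          setLIntegral_mono' measurableSet_Icc hpoint
      _ = _ := by rw [lintegral_add_right _ measurable_const, hcancel, hJ,
                    ← lintegral_add_left hnorm]
  refine (ENNReal.rpow_le_rpow hmean (by positivity)).trans
    (rpow_lintegral_le_lintegral_rpow ?_ hq (hnorm.add hnorm'))
  rw [Measure.restrict_apply_univ, hvol]
  exact ENNReal.inv_le_one.2 one_le_two

end Segments

section Poincare

variable {E : Type*} [NormedAddCommGroup E] [NormedSpace ℝ E] [FiniteDimensional ℝ E]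
  [MeasurableSpace E] [BorelSpace E] (μ : Measure E) [μ.IsAddHaarMeasure]

lemma lintegral_comp_add_smul_le {H : E → ℝ≥0∞} (hH : Measurable H) (c : E) {r : ℝ}
    (hr : 1 / 2 ≤ r) :
    ∫⁻ x, H (c + r • x) ∂μ ≤ 2 ^ Module.finrank ℝ E * ∫⁻ x, H x ∂μ := by
  have hr0 : 0 < r := by linarith
  have hscale : ENNReal.ofReal |(r ^ Module.finrank ℝ E)⁻¹| ≤ 2 ^ Module.finrank ℝ E := by
    rw [abs_of_pos (by positivity), ← inv_pow, ENNReal.ofReal_pow (by positivity)]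
    gcongr
    rw [← ENNReal.ofReal_ofNat 2]
    gcongr
    exact inv_le_of_inv_le₀ two_pos (by rwa [← one_div])
  calc ∫⁻ x, H (c + r • x) ∂μ = ∫⁻ x, H (c + x) ∂(μ.map (r • ·)) := by
        rw [lintegral_map (f := fun x => H (c + x)) (by fun_prop) (by fun_prop)]
    _ = ENNReal.ofReal |(r ^ Module.finrank ℝ E)⁻¹| * ∫⁻ x, H x ∂μ := by
        rw [Measure.map_addHaar_smul μ hr0.ne', lintegral_smul_measure, lintegral_add_left_eq_self,
          smul_eq_mul]
    _ ≤ _ := by gcongr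

lemma lintegral_lintegral_comp_segment_le {H : E → ℝ≥0∞} (hH : Measurable H) (T : Set E) {t : ℝ} :
    ∫⁻ y in T, ∫⁻ x in T, H (y + t • (x - y)) ∂μ ∂μ ≤
      2 ^ Module.finrank ℝ E * (∫⁻ x, H x ∂μ) * μ T := by
  have hmeas : Measurable fun z : E × E => H (z.1 + t • (z.2 - z.1)) := by fun_prop
  rcases le_total t (1 / 2) with ht | ht
  · rw [lintegral_lintegral_swap hmeas.aemeasurable, ← setLIntegral_const]
    refine lintegral_mono fun x => (setLIntegral_le_lintegral _ _).trans ?_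
    have heq (y : E) : t • x + (1 - t) • y = y + t • (x - y) := by module
    simpa only [heq] using lintegral_comp_add_smul_le μ hH (t • x) (r := 1 - t) (by linarith)
  · rw [← setLIntegral_const]
    refine lintegral_mono fun y => (setLIntegral_le_lintegral _ _).trans ?_
    have heq (x : E) : (1 - t) • y + t • x = y + t • (x - y) := by module
    simpa only [heq] using lintegral_comp_add_smul_le μ hH ((1 - t) • y) ht

variable {F : Type*} [NormedAddCommGroup F] [NormedSpace ℝ F] {T : Set E} {g : E → F} {q : ℝ}

lemma lintegral_lintegral_rpow_enorm_sub_le (hTo : IsOpen T) (hTc : Convex ℝ T)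
    (hg : ContDiff ℝ 1 g) (hq : 1 ≤ q) :
    ∫⁻ y in T, ∫⁻ x in T, ‖g x - g y‖ₑ ^ q ∂μ ∂μ ≤ 2 ^ Module.finrank ℝ E *
      (ediam T ^ q * ∫⁻ x in T, ‖fderiv ℝ g x‖ₑ ^ q ∂μ) * μ T := by
  have hTm : MeasurableSet T := hTo.measurableSet
  have : Continuous (fderiv ℝ g) := hg.continuous_fderiv one_ne_zero
  set H : E → ℝ≥0∞ := T.indicator fun x => (ediam T * ‖fderiv ℝ g x‖ₑ) ^ q with hH
  have hHm : Measurable H := Measurable.indicator (by fun_prop) hTm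
  have hHint : ∫⁻ x, H x ∂μ = ediam T ^ q * ∫⁻ x in T, ‖fderiv ℝ g x‖ₑ ^ q ∂μ := by
    rw [lintegral_indicator hTm, ← lintegral_const_mul _ (by fun_prop)]
    simp only [ENNReal.mul_rpow_of_nonneg _ _ (zero_le_one.trans hq)]
  have hpoint (y : E) (hy : y ∈ T) (x : E) (hx : x ∈ T) :
      ‖g x - g y‖ₑ ^ q ≤ ∫⁻ t in Set.Icc (0 : ℝ) 1, H (y + t • (x - y)) := by
    refine (rpow_enorm_sub_le_lintegral_segment hg hq x y).trans
      (setLIntegral_mono' measurableSet_Icc fun t ht => ?_)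
    rw [hH, Set.indicator_of_mem (hTc.add_smul_sub_mem hy hx ht)]
    gcongr
    exact edist_le_ediam_of_mem hx hy
  calc ∫⁻ y in T, ∫⁻ x in T, ‖g x - g y‖ₑ ^ q ∂μ ∂μ
      ≤ ∫⁻ y in T, ∫⁻ x in T, (∫⁻ t in Set.Icc (0 : ℝ) 1, H (y + t • (x - y))) ∂μ ∂μ :=
        setLIntegral_mono' hTm fun y hy => setLIntegral_mono' hTm fun x hx => hpoint y hy x hx
    _ = ∫⁻ y in T, (∫⁻ t in Set.Icc (0 : ℝ) 1, ∫⁻ x in T, H (y + t • (x - y)) ∂μ) ∂μ :=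
        lintegral_congr fun y => lintegral_lintegral_swap
          (Measurable.aemeasurable (f := fun z : E × ℝ => H (y + z.2 • (z.1 - y))) (by fun_prop))
    _ = ∫⁻ t in Set.Icc (0 : ℝ) 1, ∫⁻ y in T, ∫⁻ x in T, H (y + t • (x - y)) ∂μ ∂μ :=
        lintegral_lintegral_swap (Measurable.lintegral_prod_right' (by fun_prop :
          Measurable fun z : (E × ℝ) × E => H (z.1.1 + z.1.2 • (z.2 - z.1.1)))).aemeasurable
    _ ≤ ∫⁻ t in Set.Icc (0 : ℝ) 1, 2 ^ Module.finrank ℝ E * (∫⁻ x, H x ∂μ) * μ T :=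
        lintegral_mono fun t => lintegral_lintegral_comp_segment_le μ hHm T
    _ = _ := by rw [setLIntegral_const, hHint, Real.volume_Icc, sub_zero, ENNReal.ofReal_one,
                  mul_one]

lemma exists_eLpNorm_sub_le {p : ℝ≥0∞} (hp : 1 ≤ p) (hp' : p ≠ ⊤) (hTo : IsOpen T)
    (hTc : Convex ℝ T) (hTb : Bornology.IsBounded T) (hTn : T.Nonempty) :
    ∃ C : ℝ≥0, ∀ g : E → F, ContDiff ℝ 1 g → ∃ y ∈ T,
      eLpNorm (fun x => g x - g y) p (μ.restrict T) ≤
        C * eLpNorm (fderiv ℝ g) p (μ.restrict T) := by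
  have hp0 : p ≠ 0 := (zero_lt_one.trans_le hp).ne'
  have hq : 1 ≤ p.toReal := ENNReal.toReal_one ▸ ENNReal.toReal_mono hp' hp
  have hT0 : μ T ≠ 0 := (hTo.measure_pos μ hTn).ne'
  have hTt : μ T ≠ ⊤ := hTb.measure_lt_top.ne
  have hD : ediam T ≠ ⊤ := hTb.ediam_ne_top
  refine ⟨((2 ^ Module.finrank ℝ E * ediam T ^ p.toReal) ^ (1 / p.toReal)).toNNReal, fun g hg => ?_⟩
  have hgc : Continuous fun z : E × E => g z.2 - g z.1 := by
    have := hg.continuous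
    fun_prop
  obtain ⟨y, hy, hle⟩ := exists_le_setLAverage (μ := μ) (s := T)
    (f := fun y => ∫⁻ x in T, ‖g x - g y‖ₑ ^ p.toReal ∂μ) hT0 hTt
    (Measurable.lintegral_prod_right' (hgc.enorm.measurable.pow_const _)).aemeasurable
  refine ⟨y, hy, ?_⟩
  rw [ENNReal.coe_toNNReal (by finiteness), eLpNorm_eq_lintegral_rpow_enorm_toReal hp0 hp',
    eLpNorm_eq_lintegral_rpow_enorm_toReal hp0 hp',
    ← ENNReal.mul_rpow_of_nonneg _ _ (by positivity)]
  gcongr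
  rw [setLAverage_eq] at hle
  refine hle.trans (ENNReal.div_le_of_le_mul ?_)
  simpa only [mul_assoc] using lintegral_lintegral_rpow_enorm_sub_le μ hTo hTc hg hq

end Poincare

section Trace

open Module (finrank)

variable {E : Type*} [NormedAddCommGroup E] [NormedSpace ℝ E] {ι : Type*} [Finite ι]
  (b : AffineBasis ι ℝ E)

lemma frontier_interior_convexHull_range_subset :
    frontier (interior (convexHull ℝ (Set.range b))) ⊆
      ⋃ i, {y ∈ convexHull ℝ (Set.range b) | b.coord i y = 0} := by
  have hclosed : IsClosed (convexHull ℝ (Set.range b)) :=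
    ((Set.finite_range b).isCompact_convexHull ℝ).isClosed
  intro y hy
  rw [isOpen_interior.frontier_eq] at hy
  have hyS : y ∈ convexHull ℝ (Set.range b) := closure_minimal interior_subset hclosed hy.1
  have hcoord := hy.2
  rw [b.interior_convexHull, Set.mem_ofPred_eq, not_forall] at hcoord
  obtain ⟨i, hi⟩ := hcoord
  rw [b.convexHull_eq_nonneg_coord] at hyS
  exact Set.mem_iUnion.2 ⟨i, b.convexHull_eq_nonneg_coord ▸ hyS, (not_lt.1 hi).antisymm (hyS i)⟩

lemma finrank_ker_of_apply_eq_one [FiniteDimensional ℝ E] {f : E →L[ℝ] ℝ} {e : E} (he : f e = 1) :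
    (finrank ℝ f.ker : ℝ) = finrank ℝ E - 1 := by
  have hsurj : f.range = ⊤ := LinearMap.range_eq_top.2 fun t => ⟨t • e, by simp [he]⟩
  have hrank := LinearMap.finrank_range_add_finrank_ker (f : E →ₗ[ℝ] ℝ)
  rw [hsurj, finrank_top, Module.finrank_self] at hrank
  rw [← hrank]
  push_cast
  ring

variable [MeasurableSpace E] [BorelSpace E]

lemma hausdorffMeasure_restrict_hyperplane (f : E →L[ℝ] ℝ) (c : E) {d : ℝ} (hd : 0 ≤ d) :
    (μH[d] : Measure E).restrict {y | f y = f c} =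
      (μH[d] : Measure f.ker).map (fun w => c + w : f.ker → E) := by
  have hiso : Isometry (fun w => c + w : f.ker → E) :=
    (isometry_add_left c).comp isometry_subtype_coe
  rw [hiso.map_hausdorffMeasure (.inl hd)]
  congr 1
  ext y
  exact ⟨fun hy => ⟨⟨y - c, by simpa [sub_eq_zero] using hy⟩, by simp⟩, by
    rintro ⟨w, rfl⟩; simp [show f w = 0 from w.2]⟩

variable [FiniteDimensional ℝ E] (μ : Measure E) [μ.IsAddHaarMeasure]

lemma exists_lintegral_prod_ker_eq (f : E →L[ℝ] ℝ) {e : E} (he : f e = 1) :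
    ∃ κ : ℝ≥0, ∀ H : E → ℝ≥0∞, Measurable H →
      ∫⁻ t : ℝ, ∫⁻ w : f.ker, H (t • e + w) ∂μH[finrank ℝ f.ker] = κ * ∫⁻ x, H x ∂μ := by
  let Φ : (ℝ × f.ker) ≃L[ℝ] E := (ContinuousLinearEquiv.equivOfRightInverse f
    ((ContinuousLinearMap.id ℝ ℝ).smulRight e) fun t => by simp [he]).symm
  have : ((volume.prod μH[finrank ℝ f.ker] : Measure (ℝ × f.ker)).map Φ).IsAddHaarMeasure :=
    Φ.isAddHaarMeasure_map _
  obtain ⟨κ, hκ⟩ : ∃ κ : ℝ≥0, (volume.prod μH[finrank ℝ f.ker]).map Φ = κ • μ :=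
    ⟨_, Measure.isAddLeftInvariant_eq_smul _ _⟩
  refine ⟨κ, fun H hH => ?_⟩
  calc ∫⁻ t : ℝ, ∫⁻ w : f.ker, H (t • e + w) ∂μH[finrank ℝ f.ker]
      = ∫⁻ z, H (Φ z) ∂(volume.prod μH[finrank ℝ f.ker]) :=
        (lintegral_prod (fun z => H (Φ z)) (Measurable.aemeasurable (by fun_prop))).symm
    _ = ∫⁻ x, H x ∂((volume.prod μH[finrank ℝ f.ker]).map Φ) :=
        (lintegral_map hH Φ.continuous.measurable).symm
    _ = _ := by rw [hκ, lintegral_smul_measure, ENNReal.smul_def, smul_eq_mul]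

lemma exists_lintegral_hyperplane_segment_le (f : E →L[ℝ] ℝ) {a c : E} (hac : f (a - c) = 1) :
    ∃ κ : ℝ≥0, ∀ H : E → ℝ≥0∞, Measurable H →
      ∫⁻ y in {y | f y = f c}, (∫⁻ t in Set.Icc (0 : ℝ) (1 / 2), H (y + t • (a - y)))
        ∂μH[finrank ℝ E - 1] ≤ κ * ∫⁻ x, H x ∂μ := by
  obtain ⟨κ, hκ⟩ := exists_lintegral_prod_ker_eq μ f hac
  refine ⟨2 ^ finrank ℝ f.ker * κ, fun H hH => ?_⟩
  set ν : Measure f.ker := μH[finrank ℝ f.ker]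
  have hpath (w : f.ker) (t : ℝ) : c + (w : E) + t • (a - (c + (w : E))) =
      c + (t • (a - c) + ((1 - t) • w : f.ker)) := by
    push_cast
    module
  have hslice (t : ℝ) (ht : t ∈ Set.Icc (0 : ℝ) (1 / 2)) :
      ∫⁻ w : f.ker, H (c + (t • (a - c) + ((1 - t) • w : f.ker))) ∂ν ≤
        2 ^ finrank ℝ f.ker * ∫⁻ w : f.ker, H (c + (t • (a - c) + w)) ∂ν := by
    simpa only [zero_add] using lintegral_comp_add_smul_le ν
      (H := fun w : f.ker => H (c + (t • (a - c) + w))) (by fun_prop) 0 (r := 1 - t)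
      (by linarith [ht.2])
  rw [← finrank_ker_of_apply_eq_one hac,
    hausdorffMeasure_restrict_hyperplane f c (Nat.cast_nonneg _),
    lintegral_map (by fun_prop) (by fun_prop)]
  calc ∫⁻ w : f.ker, (∫⁻ t in Set.Icc (0 : ℝ) (1 / 2), H (c + w + t • (a - (c + w)))) ∂ν
      = ∫⁻ t in Set.Icc (0 : ℝ) (1 / 2),
          ∫⁻ w : f.ker, H (c + (t • (a - c) + ((1 - t) • w : f.ker))) ∂ν := by
        simp only [hpath]
        exact lintegral_lintegral_swap (Measurable.aemeasurable (by fun_prop))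
    _ ≤ ∫⁻ t in Set.Icc (0 : ℝ) (1 / 2),
          2 ^ finrank ℝ f.ker * ∫⁻ w : f.ker, H (c + (t • (a - c) + w)) ∂ν :=
        setLIntegral_mono' measurableSet_Icc hslice
    _ ≤ ∫⁻ t, 2 ^ finrank ℝ f.ker * ∫⁻ w : f.ker, H (c + (t • (a - c) + w)) ∂ν :=
        setLIntegral_le_lintegral _ _
    _ = 2 ^ finrank ℝ f.ker * (κ * ∫⁻ x, H x ∂μ) := by
        rw [lintegral_const_mul' _ _ (by finiteness), hκ (fun x => H (c + x)) (by fun_prop),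
          lintegral_add_left_eq_self]
    _ = _ := by rw [ENNReal.coe_mul, ENNReal.coe_pow, ENNReal.coe_ofNat, mul_assoc]

variable (F : Type*) [NormedAddCommGroup F] [NormedSpace ℝ F]

lemma exists_lintegral_hyperplane_rpow_enorm_le {S : Set E} (hS : Convex ℝ S)
    (hSc : IsClosed S) (f : E →L[ℝ] ℝ) {a : E} (ha : a ∈ S) {r : ℝ} (hr : f a = r + 1) {q : ℝ}
    (hq : 1 ≤ q) :
    ∃ C : ℝ≥0, ∀ g : E → F, ContDiff ℝ 1 g →
      ∫⁻ y in {y ∈ S | f y = r}, ‖g y‖ₑ ^ q ∂μH[finrank ℝ E - 1] ≤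
        C * ∫⁻ x in S, (2 * ‖g x‖ₑ + ediam S * ‖fderiv ℝ g x‖ₑ) ^ q ∂μ := by
  rcases Set.eq_empty_or_nonempty {y ∈ S | f y = r} with hempty | ⟨c, -, hc⟩
  · exact ⟨0, fun g _ => by simp [hempty]⟩
  obtain ⟨κ, hκ⟩ := exists_lintegral_hyperplane_segment_le μ f (a := a) (c := c)
    (by rw [map_sub, hr, hc, add_sub_cancel_left])
  refine ⟨κ, fun g hg => ?_⟩
  have hgm : Measurable (‖g ·‖ₑ) := hg.continuous.enorm.measurable
  have : Measurable (‖fderiv ℝ g ·‖ₑ) :=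
    (hg.continuous_fderiv one_ne_zero).enorm.measurable
  set H : E → ℝ≥0∞ := S.indicator fun x => (2 * ‖g x‖ₑ + ediam S * ‖fderiv ℝ g x‖ₑ) ^ q with hH
  have hpoint (y : E) (hy : y ∈ {y ∈ S | f y = r}) :
      ‖g y‖ₑ ^ q ≤ ∫⁻ t in Set.Icc (0 : ℝ) (1 / 2), H (y + t • (a - y)) := by
    refine (rpow_enorm_le_lintegral_segment hg hq a y).trans
      (setLIntegral_mono' measurableSet_Icc fun t ht => ?_)
    rw [hH, Set.indicator_of_mem
      (hS.add_smul_sub_mem hy.1 ha ⟨ht.1, ht.2.trans one_half_lt_one.le⟩)]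
    gcongr
    exact edist_le_ediam_of_mem ha hy.1
  have hmeas : MeasurableSet {y ∈ S | f y = r} :=
    (hSc.inter (isClosed_eq f.continuous continuous_const)).measurableSet
  calc ∫⁻ y in {y ∈ S | f y = r}, ‖g y‖ₑ ^ q ∂μH[finrank ℝ E - 1]
      ≤ ∫⁻ y in {y ∈ S | f y = r}, (∫⁻ t in Set.Icc (0 : ℝ) (1 / 2), H (y + t • (a - y)))
          ∂μH[finrank ℝ E - 1] := setLIntegral_mono' hmeas hpoint
    _ ≤ ∫⁻ y in {y | f y = f c}, (∫⁻ t in Set.Icc (0 : ℝ) (1 / 2), H (y + t • (a - y)))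
          ∂μH[finrank ℝ E - 1] := lintegral_mono_set fun y hy => hy.2.trans hc.symm
    _ ≤ κ * ∫⁻ x, H x ∂μ := hκ H (Measurable.indicator (by fun_prop) hSc.measurableSet)
    _ = _ := by rw [hH, lintegral_indicator hSc.measurableSet]

lemma exists_lintegral_face_rpow_enorm_le (i : ι) {q : ℝ} (hq : 1 ≤ q) :
    ∃ C : ℝ≥0, ∀ g : E → F, ContDiff ℝ 1 g →
      ∫⁻ y in {y ∈ convexHull ℝ (Set.range b) | b.coord i y = 0}, ‖g y‖ₑ ^ q
        ∂μH[finrank ℝ E - 1] ≤ C * ∫⁻ x in convexHull ℝ (Set.range b),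
          (2 * ‖g x‖ₑ + ediam (convexHull ℝ (Set.range b)) * ‖fderiv ℝ g x‖ₑ) ^ q ∂μ := by
  have hcoord (y : E) : b.coord i y = 1 + (b.coord i).linear (y - b i) := by
    have hmap := (b.coord i).map_vadd (b i) (y - b i)
    rwa [vadd_eq_add, sub_add_cancel, b.coord_apply_eq, vadd_eq_add, add_comm] at hmap
  have hface : {y ∈ convexHull ℝ (Set.range b) | b.coord i y = 0} =
      {y ∈ convexHull ℝ (Set.range b) | LinearMap.toContinuousLinearMap (b.coord i).linear y =
        (b.coord i).linear (b i) - 1} := by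
    ext y
    simp only [hcoord, map_sub, Set.mem_ofPred_eq, LinearMap.coe_toContinuousLinearMap']
    exact and_congr_right fun _ => ⟨fun h => by linarith, fun h => by linarith⟩
  rw [hface]
  exact exists_lintegral_hyperplane_rpow_enorm_le μ F (convex_convexHull ℝ _)
    ((Set.finite_range b).isCompact_convexHull ℝ).isClosed _
    (subset_convexHull ℝ _ (Set.mem_range_self i)) (by simp) hq

lemma exists_lintegral_frontier_rpow_enorm_le {q : ℝ} (hq : 1 ≤ q) :
    ∃ C : ℝ≥0, ∀ g : E → F, ContDiff ℝ 1 g →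
      ∫⁻ x in frontier (interior (convexHull ℝ (Set.range b))), ‖g x‖ₑ ^ q ∂μH[finrank ℝ E - 1] ≤
        C * ∫⁻ x in interior (convexHull ℝ (Set.range b)),
          (2 * ‖g x‖ₑ + ediam (convexHull ℝ (Set.range b)) * ‖fderiv ℝ g x‖ₑ) ^ q ∂μ := by
  have := Fintype.ofFinite ι
  choose C hC using fun i => exists_lintegral_face_rpow_enorm_le b μ F i hq
  refine ⟨∑ i, C i, fun g hg => ?_⟩
  have hinterior : interior (convexHull ℝ (Set.range b)) =ᵐ[μ] convexHull ℝ (Set.range b) :=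
    interior_ae_eq_of_null_frontier ((convex_convexHull ℝ _).addHaar_frontier μ)
  rw [Measure.restrict_congr_set hinterior, ENNReal.ofNNReal_finsetSum, Finset.sum_mul]
  refine (lintegral_mono_set (frontier_interior_convexHull_range_subset b)).trans
    ((lintegral_iUnion_le _ _).trans ?_)
  rw [tsum_fintype]
  exact Finset.sum_le_sum fun i _ => hC i g hg

theorem exists_eLpNorm_frontier_le {p : ℝ≥0∞} (hp : 1 ≤ p) (hp' : p ≠ ⊤) :
    ∃ C : ℝ≥0, ∀ g : E → F, ContDiff ℝ 1 g →
      eLpNorm g p (μH[finrank ℝ E - 1].restrict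
          (frontier (interior (convexHull ℝ (Set.range b))))) ≤
        C * (eLpNorm g p (μ.restrict (interior (convexHull ℝ (Set.range b)))) +
          eLpNorm (fderiv ℝ g) p (μ.restrict (interior (convexHull ℝ (Set.range b))))) := by
  have hp0 : p ≠ 0 := (zero_lt_one.trans_le hp).ne'
  have hq : 1 ≤ p.toReal := ENNReal.toReal_one ▸ ENNReal.toReal_mono hp' hp
  obtain ⟨C, hC⟩ := exists_lintegral_frontier_rpow_enorm_le b μ F hq
  set S := convexHull ℝ (Set.range b)
  have hD : ediam S ≠ ⊤ := ((Set.finite_range b).isCompact_convexHull ℝ).isBounded.ediam_ne_top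
  refine ⟨C ^ (1 / p.toReal) * (2 + (ediam S).toNNReal), fun g hg => ?_⟩
  calc eLpNorm g p (μH[finrank ℝ E - 1].restrict (frontier (interior S)))
      ≤ (C * ∫⁻ x in interior S, (2 * ‖g x‖ₑ + ediam S * ‖fderiv ℝ g x‖ₑ) ^ p.toReal ∂μ) ^
          (1 / p.toReal) := by
        rw [eLpNorm_eq_lintegral_rpow_enorm_toReal hp0 hp']
        gcongr
        exact hC g hg
    _ ≤ (C * ∫⁻ x in interior S, ((2 + ediam S) ^ p.toReal *
          (‖g x‖ₑ + ‖fderiv ℝ g x‖ₑ) ^ p.toReal) ∂μ) ^ (1 / p.toReal) := by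
        gcongr with x
        rw [← ENNReal.mul_rpow_of_nonneg _ _ (by positivity), mul_add]
        gcongr
        exacts [le_self_add, le_add_self]
    _ = C ^ (1 / p.toReal) * ((2 + ediam S) *
          (∫⁻ x in interior S, (‖g x‖ₑ + ‖fderiv ℝ g x‖ₑ) ^ p.toReal ∂μ) ^ (1 / p.toReal)) := by
        rw [lintegral_const_mul' _ _ (by finiteness),
          ENNReal.mul_rpow_of_nonneg _ _ (by positivity),
          ENNReal.mul_rpow_of_nonneg _ _ (by positivity), ← ENNReal.rpow_mul,
          mul_one_div_cancel (by positivity), ENNReal.rpow_one]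
    _ ≤ C ^ (1 / p.toReal) * ((2 + ediam S) * (eLpNorm g p (μ.restrict (interior S)) +
          eLpNorm (fderiv ℝ g) p (μ.restrict (interior S)))) := by
        gcongr
        simp only [eLpNorm_eq_lintegral_rpow_enorm_toReal hp0 hp']
        exact ENNReal.lintegral_Lp_add_le hg.continuous.enorm.measurable.aemeasurable
          (hg.continuous_fderiv one_ne_zero).enorm.measurable.aemeasurable hq
    _ = _ := by
        push_cast
        rw [ENNReal.coe_toNNReal hD, ENNReal.coe_rpow_of_nonneg _ (by positivity), mul_assoc]

end Trace

section SymmetricDerivatives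

open scoped ContDiff

universe u

variable {E F : Type u} [NormedAddCommGroup E] [NormedSpace ℝ E] [NormedAddCommGroup F]
  [NormedSpace ℝ F]

lemma iteratedFDeriv_fderiv_fderiv_flip {f : E → F} (hf : ContDiff ℝ ∞ f) (n : ℕ) (x : E)
    (v : Fin n → E) (a b : E) :
    iteratedFDeriv ℝ n (fderiv ℝ (fderiv ℝ f)) x v a b =
      iteratedFDeriv ℝ n (fderiv ℝ (fderiv ℝ f)) x v b a := by
  let flip : (E →L[ℝ] E →L[ℝ] F) →L[ℝ] E →L[ℝ] E →L[ℝ] F :=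
    (ContinuousLinearMap.flipₗᵢ ℝ E E F).toContinuousLinearEquiv
  have hsymm : flip ∘ fderiv ℝ (fderiv ℝ f) = fderiv ℝ (fderiv ℝ f) := by
    ext y a b
    refine (hf.contDiffAt.isSymmSndFDerivAt ?_).eq b a
    rw [minSmoothness_of_isRCLikeNormedField]
    exact WithTop.coe_le_coe.2 le_top
  have hf'' : ContDiff ℝ ∞ (fderiv ℝ (fderiv ℝ f)) := by fun_prop
  have hcomp := ContinuousLinearMap.iteratedFDeriv_comp_left
    (F := E →L[ℝ] E →L[ℝ] F) (G := E →L[ℝ] E →L[ℝ] F) flip (x := x) hf''.contDiffAt (i := n)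
    (mod_cast (le_top : (n : ℕ∞) ≤ ⊤))
  rw [hsymm] at hcomp
  exact congr($hcomp v a b)

lemma iteratedFDeriv_comp_swap_castSucc_succ {f : E → F} (hf : ContDiff ℝ ∞ f) {n : ℕ} (j : Fin n)
    (x : E) (v : Fin (n + 1) → E) :
    iteratedFDeriv ℝ (n + 1) f x (v ∘ Equiv.swap j.castSucc j.succ) =
      iteratedFDeriv ℝ (n + 1) f x v := by
  induction n generalizing F with
  | zero => exact j.elim0
  | succ n ih =>
    have hf' : ContDiff ℝ ∞ (fderiv ℝ f) := by fun_prop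
    induction j using Fin.lastCases with
    | last =>
      have hinit : Fin.init (Fin.init (v ∘ Equiv.swap (Fin.last n).castSucc (Fin.last n).succ)) =
          Fin.init (Fin.init v) := by
        ext i
        simp only [Fin.init, Function.comp_apply]
        rw [Equiv.swap_apply_of_ne_of_ne]
        · simp [Fin.ext_iff, i.2.ne]
        · simp [Fin.ext_iff]; omega
      simp only [iteratedFDeriv_succ_apply_right, hinit]
      rw [iteratedFDeriv_fderiv_fderiv_flip hf]
      simp [Fin.init]
    | cast j =>
      have hinit : Fin.init (v ∘ Equiv.swap j.castSucc.castSucc j.castSucc.succ) =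
          Fin.init v ∘ Equiv.swap j.castSucc j.succ := by
        ext i
        exact congrArg v ((Fin.castSucc_injective (n + 1)).swap_apply j.castSucc j.succ i)
      have hlast : (v ∘ Equiv.swap j.castSucc.castSucc j.castSucc.succ) (Fin.last (n + 1)) =
          v (Fin.last (n + 1)) := by
        simp only [Function.comp_apply]
        rw [Equiv.swap_apply_of_ne_of_ne] <;> simp [Fin.ext_iff] <;> omega
      rw [iteratedFDeriv_succ_apply_right, hinit, hlast, ih hf' j,
        ← iteratedFDeriv_succ_apply_right]

theorem iteratedFDeriv_comp_perm {f : E → F} (hf : ContDiff ℝ ∞ f) {n : ℕ} (x : E)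
    (v : Fin n → E) (σ : Equiv.Perm (Fin n)) :
    iteratedFDeriv ℝ n f x (v ∘ σ) = iteratedFDeriv ℝ n f x v := by
  cases n with
  | zero => rw [Subsingleton.elim (v ∘ σ) v]
  | succ n =>
    have hσ : σ ∈ Submonoid.closure (Set.range fun j : Fin n => Equiv.swap j.castSucc j.succ) := by
      rw [Equiv.Perm.mclosure_swap_castSucc_succ]
      exact Submonoid.mem_top σ
    induction hσ using Submonoid.closure_induction generalizing v with
    | mem _ h =>
      obtain ⟨j, rfl⟩ := h
      exact iteratedFDeriv_comp_swap_castSucc_succ hf j x v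
    | one => rfl
    | mul σ τ _ _ hσ hτ => rw [Equiv.Perm.coe_mul, ← Function.comp_assoc, hτ, hσ]

end SymmetricDerivatives

section Polynomials

variable {N M k l : ℕ}

/-- The space of real functions on `ℝ^N` given by polynomials of total degree at most `k`, as the
image of Mathlib's space of formal polynomials; membership is `IsPolyDegLE N k`. -/
def polySpace (N k : ℕ) : Submodule ℝ (EuclideanSpace ℝ (Fin N) → ℝ) :=
  (MvPolynomial.restrictTotalDegree (Fin N) ℝ k).map
    (LinearMap.pi fun x => (MvPolynomial.aeval fun i => x i).toLinearMap)

instance finite_polySpace (N k : ℕ) : Module.Finite ℝ (polySpace N k) :=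
  inferInstanceAs (Module.Finite ℝ ((MvPolynomial.restrictTotalDegree (Fin N) ℝ k).map _))

lemma mem_polySpace {w : EuclideanSpace ℝ (Fin N) → ℝ} : w ∈ polySpace N k ↔ IsPolyDegLE N k w := by
  simp only [polySpace, Submodule.mem_map, MvPolynomial.mem_restrictTotalDegree, IsPolyDegLE,
    funext_iff, LinearMap.pi_apply, AlgHom.toLinearMap_apply, MvPolynomial.aeval_eq_eval,
    eq_comm (b := w _)]

namespace IsPolyDegLE

variable {w z : EuclideanSpace ℝ (Fin N) → ℝ}

lemma add (hw : IsPolyDegLE N k w) (hz : IsPolyDegLE N k z) : IsPolyDegLE N k (w + z) :=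
  mem_polySpace.1 (add_mem (mem_polySpace.2 hw) (mem_polySpace.2 hz))

lemma sub (hw : IsPolyDegLE N k w) (hz : IsPolyDegLE N k z) : IsPolyDegLE N k (w - z) :=
  mem_polySpace.1 (sub_mem (mem_polySpace.2 hw) (mem_polySpace.2 hz))

lemma mono (hw : IsPolyDegLE N k w) (hkl : k ≤ l) : IsPolyDegLE N l w :=
  hw.imp fun _ hP => ⟨hP.1.trans hkl, hP.2⟩

lemma const (c : ℝ) : IsPolyDegLE N k fun _ => c :=
  ⟨MvPolynomial.C c, by simp, by simp⟩

lemma prod_coord {ι : Type*} [Fintype ι] (r : ι → Fin N) :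
    IsPolyDegLE N (Fintype.card ι) fun x => ∏ j, x (r j) :=
  ⟨∏ j, MvPolynomial.X (r j), (MvPolynomial.totalDegree_finsetProd _ _).trans (by simp),
    fun x => by simp⟩

lemma analyticOnNhd (hw : IsPolyDegLE N k w) : AnalyticOnNhd ℝ w Set.univ := by
  obtain ⟨P, -, hP⟩ := hw
  rw [show w = fun x => MvPolynomial.aeval (fun i => x i) P from funext hP]
  exact AnalyticOnNhd.aeval_mvPolynomial
    (fun i x _ => (EuclideanSpace.proj (𝕜 := ℝ) i).analyticAt x) P

lemma contDiff (hw : IsPolyDegLE N k w) {n : WithTop ℕ∞} : ContDiff ℝ n w :=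
  hw.analyticOnNhd.contDiff

lemma continuous (hw : IsPolyDegLE N k w) : Continuous w :=
  hw.contDiff (n := 0).continuous

lemma eq_zero_of_eqOn (hw : IsPolyDegLE N k w) {U : Set (EuclideanSpace ℝ (Fin N))}
    (hU : IsOpen U) (hUn : U.Nonempty) (h : Set.EqOn w 0 U) : w = 0 := by
  obtain ⟨z, hz⟩ := hUn
  exact hw.analyticOnNhd.eq_of_eventuallyEq (fun _ _ => analyticAt_const)
    (h.eventuallyEq_of_mem (hU.mem_nhds hz))

lemma comp_diagonal (A : ContinuousMultilinearMap ℝ (fun _ : Fin k => EuclideanSpace ℝ (Fin N)) ℝ) :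
    IsPolyDegLE N k fun x => A fun _ => x := by
  have hexpand : (fun x : EuclideanSpace ℝ (Fin N) => A fun _ => x) =
      ∑ r : Fin k → Fin N, A (fun j => EuclideanSpace.single (r j) 1) • fun x => ∏ j, x (r j) := by
    ext x
    conv_lhs => rw [← (EuclideanSpace.basisFun (Fin N) ℝ).sum_repr x]
    simp only [A.map_sum, A.map_smul_univ, Finset.sum_apply, Pi.smul_apply, smul_eq_mul, mul_comm,
      EuclideanSpace.basisFun_repr, EuclideanSpace.basisFun_apply]
  rw [hexpand, ← mem_polySpace]
  refine sum_mem fun r _ => Submodule.smul_mem _ _ (mem_polySpace.2 ?_)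
  simpa only [Fintype.card_fin] using prod_coord r

lemma comp (hw : IsPolyDegLE N k w) {g : EuclideanSpace ℝ (Fin M) → EuclideanSpace ℝ (Fin N)}
    (hg : ∀ i, IsPolyDegLE M l fun x => g x i) : IsPolyDegLE M (k * l) (w ∘ g) := by
  obtain ⟨P, hPk, hP⟩ := hw
  choose G hGl hG using hg
  refine ⟨MvPolynomial.bind₁ G P, ?_, fun x => ?_⟩
  · rw [MvPolynomial.bind₁, MvPolynomial.aeval_def, MvPolynomial.eval₂_eq]
    refine MvPolynomial.totalDegree_finsetSum_le fun d hd => ?_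
    calc _ ≤ 0 + ∑ i ∈ d.support, d i * l := by
          refine (MvPolynomial.totalDegree_mul _ _).trans (add_le_add (by simp) ?_)
          refine (MvPolynomial.totalDegree_finsetProd _ _).trans (Finset.sum_le_sum fun i _ => ?_)
          exact (MvPolynomial.totalDegree_pow _ _).trans (Nat.mul_le_mul_left _ (hGl i))
      _ ≤ k * l := by
          rw [zero_add, ← Finset.sum_mul]
          exact Nat.mul_le_mul_right _ ((MvPolynomial.le_totalDegree hd).trans hPk)
  · rw [Function.comp_apply, hP, ← MvPolynomial.aeval_eq_eval, ← MvPolynomial.aeval_eq_eval,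
      MvPolynomial.aeval_bind₁]
    simp only [hG, MvPolynomial.aeval_eq_eval]

lemma comp_affineMap (hw : IsPolyDegLE N k w)
    (φ : EuclideanSpace ℝ (Fin M) →ᵃ[ℝ] EuclideanSpace ℝ (Fin N)) : IsPolyDegLE M k (w ∘ φ) := by
  rw [← mul_one k]
  refine hw.comp fun i => ?_
  let coord : EuclideanSpace ℝ (Fin M) →L[ℝ] ℝ :=
    (EuclideanSpace.proj i).comp φ.linear.toContinuousLinearMap
  have hcoord : (fun x => φ x i) =
      (fun x => ContinuousMultilinearMap.ofSubsingleton ℝ _ ℝ (0 : Fin 1) coord fun _ => x) +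
        fun _ => φ 0 i :=
    funext fun x => congr($(φ.decomp) x i)
  rw [hcoord]
  exact (comp_diagonal _).add (const _)

end IsPolyDegLE

end Polynomials

section BrambleHilbert

open scoped ContDiff

variable {N s : ℕ} {p : ℝ≥0∞} {T : Set (EuclideanSpace ℝ (Fin N))}
  {u : EuclideanSpace ℝ (Fin N) → ℝ}

lemma sobSemi_eq_eLpNorm_iteratedFDeriv :
    sobSemi s p T u = eLpNorm (iteratedFDeriv ℝ s u) p (volume.restrict T) :=
  eLpNorm_norm _

lemma sobSemi_zero_eq_eLpNorm : sobSemi 0 p T u = eLpNorm u p (volume.restrict T) := by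
  simp only [sobSemi, norm_iteratedFDeriv_zero, eLpNorm_norm]

lemma sobSemi_succ_eq_eLpNorm_fderiv :
    sobSemi (s + 1) p T u = eLpNorm (fderiv ℝ (iteratedFDeriv ℝ s u)) p (volume.restrict T) := by
  simp only [sobSemi, ← norm_fderiv_iteratedFDeriv]
  exact eLpNorm_norm (fderiv ℝ (iteratedFDeriv ℝ s u))

lemma exists_isPolyDegLE_iteratedFDeriv_eq (hu : ContDiff ℝ ∞ u) (s : ℕ)
    (y : EuclideanSpace ℝ (Fin N)) :
    ∃ Q, IsPolyDegLE N s Q ∧ iteratedFDeriv ℝ s Q = fun _ => iteratedFDeriv ℝ s u y := by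
  refine ⟨fun x => ((s.factorial : ℝ)⁻¹ • iteratedFDeriv ℝ s u y) fun _ => x,
    IsPolyDegLE.comp_diagonal _, ?_⟩
  ext x v
  have hsymm (σ : Equiv.Perm (Fin s)) :
      iteratedFDeriv ℝ s u y (fun i => v (σ i)) = iteratedFDeriv ℝ s u y v :=
    iteratedFDeriv_comp_perm hu y v σ
  rw [ContinuousMultilinearMap.iteratedFDeriv_comp_diagonal]
  simp [hsymm, Fintype.card_perm, Nat.factorial_ne_zero]

theorem exists_isPolyDegLE_sobSemi_sub_le (hp : 1 ≤ p) (hp' : p ≠ ⊤) (hTo : IsOpen T)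
    (hTc : Convex ℝ T) (hTb : Bornology.IsBounded T) (hTn : T.Nonempty) (s : ℕ) :
    ∃ C : ℝ≥0, ∀ u : EuclideanSpace ℝ (Fin N) → ℝ, ContDiff ℝ ∞ u →
      ∃ Q, IsPolyDegLE N (s - 1) Q ∧ iteratedFDeriv ℝ s Q = 0 ∧
        ∀ j ≤ s, sobSemi j p T (u - Q) ≤ C * sobSemi s p T u := by
  induction s with
  | zero =>
    refine ⟨1, fun u _ => ⟨0, IsPolyDegLE.const 0, iteratedFDeriv_fun_zero, fun j hj => ?_⟩⟩
    simp [Nat.le_zero.1 hj]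
  | succ s ih =>
    obtain ⟨C, hC⟩ := ih
    obtain ⟨C', hC'⟩ := exists_eLpNorm_sub_le volume hp hp' hTo hTc hTb hTn
      (F := ContinuousMultilinearMap ℝ (fun _ : Fin s => EuclideanSpace ℝ (Fin N)) ℝ)
    refine ⟨1 + C * C', fun u hu => ?_⟩
    obtain ⟨y, -, hy⟩ := hC' (iteratedFDeriv ℝ s u) (hu.iteratedFDeriv_right (mod_cast le_top))
    obtain ⟨Q₁, hQ₁, hDQ₁⟩ := exists_isPolyDegLE_iteratedFDeriv_eq hu s y
    obtain ⟨Q₂, hQ₂, hDQ₂, hle⟩ := hC (u - Q₁) (hu.sub hQ₁.contDiff)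
    have hDQ : iteratedFDeriv ℝ s (Q₁ + Q₂) = fun _ => iteratedFDeriv ℝ s u y := by
      rw [iteratedFDeriv_add hQ₁.contDiff hQ₂.contDiff, hDQ₁, hDQ₂, add_zero]
    have hzero : iteratedFDeriv ℝ (s + 1) (Q₁ + Q₂) = 0 := by
      rw [iteratedFDeriv_succ_eq_comp_left, hDQ]
      ext x v
      simp
    have hQ : IsPolyDegLE N s (Q₁ + Q₂) := hQ₁.add (hQ₂.mono (Nat.sub_le s 1))
    have : ContDiff ℝ ∞ (Q₁ + Q₂) := hQ.contDiff
    refine ⟨Q₁ + Q₂, hQ, hzero, fun j hj => ?_⟩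
    rcases hj.lt_or_eq with hj | rfl
    · have hDu : iteratedFDeriv ℝ s (u - Q₁) =
          fun x => iteratedFDeriv ℝ s u x - iteratedFDeriv ℝ s u y := by
        rw [iteratedFDeriv_sub (contDiff_infty.1 hu s) hQ₁.contDiff, hDQ₁]
        rfl
      calc sobSemi j p T (u - (Q₁ + Q₂))
          ≤ C * sobSemi s p T (u - Q₁) := by
            rw [← sub_sub]
            exact hle j (Nat.lt_succ_iff.1 hj)
        _ ≤ C * (C' * sobSemi (s + 1) p T u) := by
            rw [sobSemi_eq_eLpNorm_iteratedFDeriv, hDu, sobSemi_succ_eq_eLpNorm_fderiv]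
            gcongr
        _ ≤ (1 + C * C' : ℝ≥0) * sobSemi (s + 1) p T u := by
            rw [← mul_assoc, ENNReal.coe_add, ENNReal.coe_mul]
            gcongr
            exact le_add_self
    · rw [sobSemi_eq_eLpNorm_iteratedFDeriv, iteratedFDeriv_sub (contDiff_infty.1 hu _) hQ.contDiff,
        hzero, sub_zero, ← sobSemi_eq_eLpNorm_iteratedFDeriv]
      exact le_mul_of_one_le_left' (mod_cast le_self_add)

end BrambleHilbert

section Projection

open scoped ContDiff

lemma memLp_restrict_of_isBounded {E F : Type*} [NormedAddCommGroup E] [ProperSpace E]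
    [MeasurableSpace E] [BorelSpace E] {μ : Measure E} [IsFiniteMeasureOnCompacts μ]
    [NormedAddCommGroup F] {T : Set E} (hTb : Bornology.IsBounded T) {f : E → F}
    (hf : Continuous f) (p : ℝ≥0∞) : MemLp f p (μ.restrict T) := by
  have : IsFiniteMeasure (μ.restrict T) :=
    ⟨by simpa only [Measure.restrict_apply_univ] using hTb.measure_lt_top⟩
  obtain ⟨C, hC⟩ := hTb.isCompact_closure.exists_bound_of_continuousOn hf.continuousOn
  refine MemLp.mono_measure (Measure.restrict_mono subset_closure le_rfl) ?_
  have : IsFiniteMeasure (μ.restrict (closure T)) :=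
    ⟨by simpa only [Measure.restrict_apply_univ] using hTb.isCompact_closure.measure_lt_top⟩
  exact .of_bound hf.aestronglyMeasurable C
    (ae_restrict_of_forall_mem isClosed_closure.measurableSet hC)

variable {N k : ℕ} {p : ℝ≥0∞} {T : Set (EuclideanSpace ℝ (Fin N))}
  {v u P Q : EuclideanSpace ℝ (Fin N) → ℝ}

/-- `P` is the `L²(T)`-projection `π_T^k v` of `v` onto the polynomials of total degree at most
`k`. -/
def IsL2Projection (k : ℕ) (T : Set (EuclideanSpace ℝ (Fin N)))
    (v P : EuclideanSpace ℝ (Fin N) → ℝ) : Prop :=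
  IsPolyDegLE N k P ∧ ∀ q, IsPolyDegLE N k q → ∫ x in T, P x * q x = ∫ x in T, v x * q x

lemma integrableOn_mul_of_isBounded (hTb : Bornology.IsBounded T) (hv : Continuous v)
    (hu : Continuous u) : IntegrableOn (fun x => v x * u x) T :=
  memLp_one_iff_integrable.1 (memLp_restrict_of_isBounded hTb (hv.mul hu) 1)

lemma IsL2Projection.sub (hP : IsL2Projection k T v P) (hTb : Bornology.IsBounded T)
    (hv : Continuous v) (hQ : IsPolyDegLE N k Q) : IsL2Projection k T (v - Q) (P - Q) := by
  refine ⟨hP.1.sub hQ, fun q hq => ?_⟩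
  have hQq := integrableOn_mul_of_isBounded hTb hQ.continuous hq.continuous
  simp only [Pi.sub_apply, sub_mul]
  rw [integral_sub (integrableOn_mul_of_isBounded hTb hP.1.continuous hq.continuous) hQq,
    integral_sub (integrableOn_mul_of_isBounded hTb hv hq.continuous) hQq, hP.2 q hq]

lemma IsL2Projection.congr (hP : IsL2Projection k T v P) (hT : MeasurableSet T)
    (huv : Set.EqOn u v T) : IsL2Projection k T u P := by
  refine ⟨hP.1, fun q hq => (hP.2 q hq).trans (setIntegral_congr_fun hT fun x hx => ?_)⟩
  simp only [huv hx]

lemma IsPolyDegLE.eq_zero_of_setIntegral_mul_self (hP : IsPolyDegLE N k P) (hTo : IsOpen T)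
    (hTb : Bornology.IsBounded T) (hTn : T.Nonempty) (h : ∫ x in T, P x * P x = 0) : P = 0 := by
  have hae : P * P =ᵐ[volume.restrict T] 0 :=
    (setIntegral_eq_zero_iff_of_nonneg_ae (.of_forall fun x => mul_self_nonneg (P x))
      (integrableOn_mul_of_isBounded hTb hP.continuous hP.continuous)).1 h
  have hEqOn : Set.EqOn (P * P) 0 T :=
    Measure.eqOn_open_of_ae_eq hae hTo (hP.continuous.mul hP.continuous).continuousOn
      continuousOn_const
  exact hP.eq_zero_of_eqOn hTo hTn fun x hx => mul_self_eq_zero.1 (hEqOn hx)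

/-- The inner product of `L²(T)` on polynomials of total degree at most `k`. -/
def l2Form (k : ℕ) (hTb : Bornology.IsBounded T) : LinearMap.BilinForm ℝ (polySpace N k) :=
  have hint (P Q : polySpace N k) : IntegrableOn (fun x => P.1 x * Q.1 x) T :=
    integrableOn_mul_of_isBounded hTb (mem_polySpace.1 P.2).continuous
      (mem_polySpace.1 Q.2).continuous
  LinearMap.mk₂ ℝ (fun P Q => ∫ x in T, P.1 x * Q.1 x)
    (fun P P' Q => by simpa [add_mul] using integral_add (hint P Q) (hint P' Q))
    (fun c P Q => by simp [mul_assoc, integral_const_mul])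
    (fun P Q Q' => by simpa [mul_add] using integral_add (hint P Q) (hint P Q'))
    (fun c P Q => by simp [mul_left_comm _ c, integral_const_mul])

lemma nondegenerate_l2Form (k : ℕ) (hTo : IsOpen T) (hTb : Bornology.IsBounded T)
    (hTn : T.Nonempty) : (l2Form k hTb).Nondegenerate := by
  have hdef (P : polySpace N k) (hP : l2Form k hTb P P = 0) : P = 0 :=
    Subtype.ext ((mem_polySpace.1 P.2).eq_zero_of_setIntegral_mul_self hTo hTb hTn hP)
  exact ⟨fun P hP => hdef P (hP P), fun P hP => hdef P (hP P)⟩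

lemma enorm_setIntegral_mul_le (q : ℝ≥0∞) [ENNReal.HolderConjugate p q] (hv : Continuous v)
    (hu : Continuous u) : ‖∫ x in T, v x * u x‖ₑ ≤
      eLpNorm v p (volume.restrict T) * eLpNorm u q (volume.restrict T) := by
  calc ‖∫ x in T, v x * u x‖ₑ ≤ ∫⁻ x in T, ‖v x * u x‖ₑ := enorm_integral_le_lintegral_enorm _
    _ = eLpNorm (v • u) 1 (volume.restrict T) := eLpNorm_one_eq_lintegral_enorm.symm
    _ ≤ _ := eLpNorm_smul_le_mul_eLpNorm hu.aestronglyMeasurable hv.aestronglyMeasurable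

lemma IsL2Projection.eq_sum_dualBasis {ι : Type*} [Fintype ι] [DecidableEq ι]
    (hP : IsL2Projection k T v P) (hTb : Bornology.IsBounded T)
    (hB : (l2Form k hTb).Nondegenerate) (b : Module.Basis ι ℝ (polySpace N k)) :
    P = ∑ i, (∫ x in T, v x * (b i).1 x) • ((l2Form k hTb).dualBasis hB b i).1 := by
  have hsum := ((l2Form k hTb).dualBasis hB b).sum_repr ⟨P, mem_polySpace.2 hP.1⟩
  simp only [LinearMap.BilinForm.dualBasis_repr_apply] at hsum
  conv_lhs => rw [← Submodule.coe_mk P (mem_polySpace.2 hP.1), ← hsum]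
  simp only [Submodule.coe_sum, Submodule.coe_smul]
  exact Finset.sum_congr rfl fun i _ => congrArg (· • _) (hP.2 _ (mem_polySpace.1 (b i).2))

lemma aestronglyMeasurable_iteratedFDeriv (hu : ContDiff ℝ ∞ u) (j : ℕ)
    (μ : Measure (EuclideanSpace ℝ (Fin N))) :
    AEStronglyMeasurable (iteratedFDeriv ℝ j u) μ :=
  (hu.continuous_iteratedFDeriv (mod_cast le_top)).aestronglyMeasurable

lemma sobSemi_sub_le (hp : 1 ≤ p) (j : ℕ) (hu : ContDiff ℝ ∞ u) (hv : ContDiff ℝ ∞ v) :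
    sobSemi j p T (u - v) ≤ sobSemi j p T u + sobSemi j p T v := by
  simp only [sobSemi_eq_eLpNorm_iteratedFDeriv]
  rw [iteratedFDeriv_sub (contDiff_infty.1 hu j) (contDiff_infty.1 hv j)]
  exact eLpNorm_sub_le (aestronglyMeasurable_iteratedFDeriv hu j _)
    (aestronglyMeasurable_iteratedFDeriv hv j _) hp

lemma sobSemi_sum_smul_le {ι : Type*} [Fintype ι] (hp : 1 ≤ p) (j : ℕ) (c : ι → ℝ)
    {f : ι → EuclideanSpace ℝ (Fin N) → ℝ} (hf : ∀ i, ContDiff ℝ ∞ (f i)) :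
    sobSemi j p T (∑ i, c i • f i) ≤ ∑ i, ‖c i‖ₑ * sobSemi j p T (f i) := by
  have hD : iteratedFDeriv ℝ j (∑ i, c i • f i) = ∑ i, c i • iteratedFDeriv ℝ j (f i) := by
    ext1 x
    have hfx (i : ι) : ContDiffAt ℝ j (f i) x := (contDiff_infty.1 (hf i) j).contDiffAt
    rw [iteratedFDeriv_sum_apply (f := fun i => c i • f i) fun i _ => (hfx i).const_smul (c i)]
    simp only [Finset.sum_apply, Pi.smul_apply, iteratedFDeriv_const_smul_apply (hfx _)]
  simp only [sobSemi_eq_eLpNorm_iteratedFDeriv, hD]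
  calc _ ≤ ∑ i, eLpNorm (c i • iteratedFDeriv ℝ j (f i)) p (volume.restrict T) :=
        eLpNorm_sum_le
          (fun i _ => (aestronglyMeasurable_iteratedFDeriv (hf i) j _).const_smul (c i)) hp
    _ = _ := by simp only [eLpNorm_const_smul]

theorem exists_sobSemi_l2Projection_le (k : ℕ) (hp : 1 ≤ p) (hTo : IsOpen T)
    (hTb : Bornology.IsBounded T) (hTn : T.Nonempty) (j : ℕ) :
    ∃ C : ℝ≥0, ∀ v P : EuclideanSpace ℝ (Fin N) → ℝ, Continuous v → IsL2Projection k T v P →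
      sobSemi j p T P ≤ C * sobSemi 0 p T v := by
  classical
  have hB := nondegenerate_l2Form k hTo hTb hTn
  have := ENNReal.HolderConjugate.conjExponent hp
  let b := Module.finBasis ℝ (polySpace N k)
  let d := (l2Form k hTb).dualBasis hB b
  have hsmooth (R : polySpace N k) : ContDiff ℝ ∞ R.1 := (mem_polySpace.1 R.2).contDiff
  let C := ∑ i, eLpNorm (b i).1 p.conjExponent (volume.restrict T) * sobSemi j p T (d i).1
  have hC : C ≠ ⊤ := ENNReal.sum_ne_top.2 fun i _ => ENNReal.mul_ne_top
    (memLp_restrict_of_isBounded hTb (hsmooth (b i)).continuous _).eLpNorm_ne_top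
    (memLp_restrict_of_isBounded hTb
      ((hsmooth (d i)).continuous_iteratedFDeriv (mod_cast le_top)).norm _).eLpNorm_ne_top
  refine ⟨C.toNNReal, fun v P hv hP => ?_⟩
  rw [ENNReal.coe_toNNReal hC, Finset.sum_mul]
  calc sobSemi j p T P ≤ ∑ i, ‖∫ x in T, v x * (b i).1 x‖ₑ * sobSemi j p T (d i).1 := by
        conv_lhs => rw [hP.eq_sum_dualBasis hTb hB b]
        exact sobSemi_sum_smul_le hp j _ fun i => hsmooth (d i)
    _ ≤ ∑ i, (sobSemi 0 p T v * eLpNorm (b i).1 p.conjExponent (volume.restrict T)) *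
          sobSemi j p T (d i).1 := by
        rw [sobSemi_zero_eq_eLpNorm]
        gcongr with i
        exact enorm_setIntegral_mul_le _ hv (hsmooth (b i)).continuous
    _ = _ := Finset.sum_congr rfl fun i _ => by ring

theorem exists_sobSemi_sub_l2Projection_le {s : ℕ} (hp : 1 ≤ p) (hp' : p ≠ ⊤) (hTo : IsOpen T)
    (hTc : Convex ℝ T) (hTb : Bornology.IsBounded T) (hTn : T.Nonempty) (hsk : s ≤ k + 1) {j : ℕ}
    (hj : j ≤ s) :
    ∃ C : ℝ≥0, ∀ u P : EuclideanSpace ℝ (Fin N) → ℝ, ContDiff ℝ ∞ u → IsL2Projection k T u P →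
      sobSemi j p T (u - P) ≤ C * sobSemi s p T u := by
  obtain ⟨C, hC⟩ := exists_isPolyDegLE_sobSemi_sub_le hp hp' hTo hTc hTb hTn s
  obtain ⟨C', hC'⟩ := exists_sobSemi_l2Projection_le k hp hTo hTb hTn j
  refine ⟨C + C' * C, fun u P hu hP => ?_⟩
  obtain ⟨Q, hQ, -, hle⟩ := hC u hu
  have hQk : IsPolyDegLE N k Q := hQ.mono (by lia)
  have huQ : ContDiff ℝ ∞ (u - Q) := hu.sub hQ.contDiff
  calc sobSemi j p T (u - P) = sobSemi j p T ((u - Q) - (P - Q)) := by rw [sub_sub_sub_cancel_right]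
    _ ≤ sobSemi j p T (u - Q) + sobSemi j p T (P - Q) :=
        sobSemi_sub_le hp j huQ (hP.1.sub hQk).contDiff
    _ ≤ C * sobSemi s p T u + C' * (C * sobSemi s p T u) := by
        gcongr
        · exact hle j hj
        · exact (hC' _ _ huQ.continuous (hP.sub hTb hu.continuous hQk)).trans
            (by gcongr; exact hle 0 (Nat.zero_le s))
    _ = _ := by push_cast; ring

end Projection

section TraceEstimate

open scoped ContDiff

variable {N k s m : ℕ} {p : ℝ≥0∞} {T : Set (EuclideanSpace ℝ (Fin N))} {C : ℝ≥0}

/-- The trace estimate on `T`, with constant `C`: on `∂T`, the `m`-th derivative of the error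
`u - π_T^k u` is bounded in `L^p` by `C |u|_{W^{s,p}(T)}`. Only globally smooth `u` are considered;
`TraceEstimate.of_contDiffOn` removes this restriction. -/
def TraceEstimate (k s m : ℕ) (p : ℝ≥0∞) (T : Set (EuclideanSpace ℝ (Fin N))) (C : ℝ≥0) : Prop :=
  ∀ u P : EuclideanSpace ℝ (Fin N) → ℝ, ContDiff ℝ ∞ u → IsL2Projection k T u P →
    eLpNorm (iteratedFDeriv ℝ m (u - P)) p (μH[(N : ℝ) - 1].restrict (frontier T)) ≤
      C * sobSemi s p T u

theorem exists_traceEstimate {ι : Type*} [Finite ι]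
    (b : AffineBasis ι ℝ (EuclideanSpace ℝ (Fin N))) (hp : 1 ≤ p) (hp' : p ≠ ⊤) (hsk : s ≤ k + 1)
    (hm : m < s) :
    ∃ C : ℝ≥0, TraceEstimate k s m p (interior (convexHull ℝ (Set.range b))) C := by
  set T := interior (convexHull ℝ (Set.range b))
  have hTb : Bornology.IsBounded T :=
    ((Set.finite_range b).isCompact_convexHull ℝ).isBounded.subset interior_subset
  have hTn : T.Nonempty := interior_convexHull_nonempty_iff_affineSpan_eq_top.2 b.tot
  have happrox {j : ℕ} (hj : j ≤ s) := exists_sobSemi_sub_l2Projection_le hp hp' isOpen_interior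
    (convex_convexHull ℝ (Set.range b)).interior hTb hTn hsk hj
  obtain ⟨C, hC⟩ := happrox hm.le
  obtain ⟨C', hC'⟩ := happrox hm
  obtain ⟨A, hA⟩ := exists_eLpNorm_frontier_le b volume
    (EuclideanSpace ℝ (Fin N) [×m]→L[ℝ] ℝ) hp hp'
  rw [finrank_euclideanSpace_fin] at hA
  refine ⟨A * (C + C'), fun u P hu hP => ?_⟩
  calc _ ≤ A * (sobSemi m p T (u - P) + sobSemi (m + 1) p T (u - P)) := by
        rw [sobSemi_eq_eLpNorm_iteratedFDeriv, sobSemi_succ_eq_eLpNorm_fderiv]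
        exact hA _ ((hu.sub hP.1.contDiff).iteratedFDeriv_right (mod_cast le_top))
    _ ≤ A * (C * sobSemi s p T u + C' * sobSemi s p T u) := by
        gcongr
        exacts [hC u P hu hP, hC' u P hu hP]
    _ = _ := by push_cast; ring

lemma exists_contDiff_eventuallyEq {E F : Type*} [NormedAddCommGroup E] [NormedSpace ℝ E]
    [FiniteDimensional ℝ E] [NormedAddCommGroup F] [NormedSpace ℝ F] {K V : Set E}
    (hK : IsClosed K) (hV : IsOpen V) (hKV : K ⊆ V) {v : E → F} (hv : ContDiffOn ℝ ∞ v V) :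
    ∃ u : E → F, ContDiff ℝ ∞ u ∧ ∀ x ∈ K, u =ᶠ[nhds x] v := by
  obtain ⟨U, hU, hKU, hUV⟩ := normal_exists_closure_subset hK hV hKV
  obtain ⟨χ, hχ_one, hχ_zero, -⟩ := exists_contMDiffMap_one_nhds_of_subset_interior (n := (⊤ : ℕ∞))
    (modelWithCornersSelf ℝ E) hK (hKU.trans (hU.subset_interior_iff.2 subset_closure))
  refine ⟨fun x => χ x • v x, contDiff_iff_contDiffAt.2 fun x => ?_, fun x hx => ?_⟩
  · by_cases hx : x ∈ closure U
    · exact χ.contMDiff.contDiff.contDiffAt.smul (hv.contDiffAt (hV.mem_nhds (hUV hx)))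
    · refine (contDiffAt_const (c := 0)).congr_of_eventuallyEq ?_
      filter_upwards [isClosed_closure.isOpen_compl.mem_nhds hx] with y hy
      rw [hχ_zero y hy, zero_smul]
  · filter_upwards [hχ_one.filter_mono (nhds_le_nhdsSet hx)] with y hy
    rw [hy, one_smul]

lemma TraceEstimate.of_contDiffOn (hC : TraceEstimate k s m p T C) (hT : IsOpen T)
    {V : Set (EuclideanSpace ℝ (Fin N))} (hV : IsOpen V) (hTV : closure T ⊆ V)
    {v P : EuclideanSpace ℝ (Fin N) → ℝ} (hv : ContDiffOn ℝ ∞ v V) (hP : IsL2Projection k T v P) :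
    eLpNorm (fun x => ‖iteratedFDeriv ℝ m (fun y => v y - P y) x‖) p
      (μH[(N : ℝ) - 1].restrict (frontier T)) ≤ C * sobSemi s p T v := by
  obtain ⟨u, hu, huv⟩ := exists_contDiff_eventuallyEq isClosed_closure hV hTV hv
  have hfrontier (x) (hx : x ∈ frontier T) :
      iteratedFDeriv ℝ m (fun y => v y - P y) x = iteratedFDeriv ℝ m (u - P) x :=
    (((huv x (frontier_subset_closure hx)).symm.sub .rfl).iteratedFDeriv ℝ m).self_of_nhds
  have hinterior (x) (hx : x ∈ T) : iteratedFDeriv ℝ s v x = iteratedFDeriv ℝ s u x :=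
    ((huv x (subset_closure hx)).symm.iteratedFDeriv ℝ s).self_of_nhds
  rw [eLpNorm_norm, sobSemi_eq_eLpNorm_iteratedFDeriv,
    eLpNorm_congr_ae (ae_restrict_of_forall_mem isClosed_frontier.measurableSet hfrontier),
    eLpNorm_congr_ae (ae_restrict_of_forall_mem hT.measurableSet hinterior),
    ← sobSemi_eq_eLpNorm_iteratedFDeriv]
  exact hC u P hu <| hP.congr hT.measurableSet fun x hx => (huv x (subset_closure hx)).self_of_nhds

end TraceEstimate

section AffineTransport

open Module (finrank)
open scoped ContDiff

lemma hausdorffMeasure_restrict_image_le {X Y : Type*} [EMetricSpace X]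
    [EMetricSpace Y] [MeasurableSpace X] [BorelSpace X] [MeasurableSpace Y] [BorelSpace Y]
    {K : ℝ≥0} {φ : X → Y} (hφ : LipschitzWith K φ) {d : ℝ} (hd : 0 ≤ d) (S : Set X) :
    (μH[d] : Measure Y).restrict (φ '' S) ≤
      ((K ^ d : ℝ≥0) : ℝ≥0∞) • ((μH[d] : Measure X).restrict S).map φ := by
  refine Measure.le_iff.2 fun B hB => ?_
  have hm : Measurable φ := hφ.continuous.measurable
  rw [Measure.restrict_apply hB, Measure.smul_apply, Measure.map_apply hm hB,
    Measure.restrict_apply (hm hB), Set.inter_comm, ← Set.image_inter_preimage, Set.inter_comm,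
    ENNReal.coe_rpow_of_nonneg _ hd]
  exact hφ.hausdorffMeasure_image_le hd _

section Geometry

variable {E : Type*} [NormedAddCommGroup E] [NormedSpace ℝ E] {K : ℝ≥0}

lemma addHaar_restrict_image_le [FiniteDimensional ℝ E] [MeasurableSpace E] [BorelSpace E]
    {φ : E → E} (hφ : LipschitzWith K φ) (μ : Measure E) [μ.IsAddHaarMeasure] (S : Set E) :
    μ.restrict (φ '' S) ≤ ((K ^ finrank ℝ E : ℝ≥0) : ℝ≥0∞) • (μ.restrict S).map φ := by
  have : (μH[finrank ℝ E] : Measure E).IsAddHaarMeasure := isAddHaarMeasure_hausdorffMeasure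
  obtain ⟨κ, hκ⟩ : ∃ κ : ℝ≥0, μ = κ • (μH[finrank ℝ E] : Measure E) :=
    ⟨_, Measure.isAddLeftInvariant_eq_smul _ _⟩
  have hle := hausdorffMeasure_restrict_image_le hφ (Nat.cast_nonneg (finrank ℝ E)) S
  rw [NNReal.rpow_natCast] at hle
  rw [hκ, Measure.restrict_smul, Measure.restrict_smul, Measure.map_smul, smul_comm]
  gcongr

lemma lipschitzWith_of_mapsTo_closedBall {F : Type*} [NormedAddCommGroup F] [NormedSpace ℝ F]
    (φ : E →ᴬ[ℝ] F) {c : E} {r D : ℝ≥0} (hr : r ≠ 0) {W : Set F} (hW : Bornology.IsBounded W)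
    (hD : diam W ≤ D) (hφ : Set.MapsTo φ (closedBall c r) W) : LipschitzWith (D / r) φ := by
  have hr0 : (0 : ℝ) < r := by positivity
  have hnorm : ‖φ.contLinear‖ ≤ D / r := by
    refine φ.contLinear.opNorm_le_of_unit_norm (by positivity) fun z hz => ?_
    have hz_mem : c + (r : ℝ) • z ∈ closedBall c r := by simp [norm_smul, hz]
    have hdist := dist_le_diam_of_mem hW (hφ hz_mem) (hφ (mem_closedBall_self r.2))
    rw [dist_eq_norm, ← vsub_eq_sub, ← φ.contLinear_map_vsub, vsub_eq_sub, add_sub_cancel_left,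
      map_smul, norm_smul, Real.norm_of_nonneg hr0.le] at hdist
    rw [le_div_iff₀' hr0]
    exact hdist.trans hD
  refine LipschitzWith.of_dist_le_mul fun x y => ?_
  rw [dist_eq_norm, dist_eq_norm, ← vsub_eq_sub (φ x), ← φ.contLinear_map_vsub]
  exact φ.contLinear.le_of_opNorm_le hnorm (x - y)

lemma setIntegral_image_continuousAffineEquiv {E F : Type*} [NormedAddCommGroup E]
    [NormedSpace ℝ E] [FiniteDimensional ℝ E] [MeasurableSpace E] [BorelSpace E]
    [NormedAddCommGroup F] [NormedSpace ℝ F] (μ : Measure E) [μ.IsAddHaarMeasure] (φ : E ≃ᴬ[ℝ] E)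
    {T : Set E} (hT : MeasurableSet T) (g : E → F) :
    ∫ x in φ '' T, g x ∂μ =
      |φ.toContinuousAffineMap.contLinear.det| • ∫ x in T, g (φ x) ∂μ :=
  (integral_image_eq_integral_abs_det_fderiv_smul μ hT
    (fun _ _ => φ.toContinuousAffineMap.hasFDerivWithinAt) φ.injective.injOn g).trans
    (integral_smul _ _)

end Geometry

section Derivatives

variable {E E' F : Type*} [NormedAddCommGroup E] [NormedSpace ℝ E] [NormedAddCommGroup E']
  [NormedSpace ℝ E'] [NormedAddCommGroup F] [NormedSpace ℝ F] {K : ℝ≥0} {m : ℕ} {u : E' → F}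

lemma nnnorm_iteratedFDeriv_comp_continuousAffineMap_le (φ : E →ᴬ[ℝ] E') (hφ : LipschitzWith K φ)
    (hu : ContDiff ℝ m u) (x : E) :
    ‖iteratedFDeriv ℝ m (u ∘ φ) x‖₊ ≤ K ^ m * ‖iteratedFDeriv ℝ m u (φ x)‖₊ := by
  have hshift : ContDiff ℝ m fun z => u (φ 0 + z) := by fun_prop
  have hdecomp (y : E) : φ y = φ 0 + φ.contLinear y := by
    rw [add_comm]
    exact congrFun φ.decomp y
  have hcomp : u ∘ φ = (fun z => u (φ 0 + z)) ∘ φ.contLinear :=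
    funext fun y => congrArg u (hdecomp y)
  rw [hcomp, φ.contLinear.iteratedFDeriv_comp_right hshift x le_rfl, iteratedFDeriv_comp_add_left,
    ← hdecomp, mul_comm, ← NNReal.coe_le_coe]
  refine (ContinuousMultilinearMap.norm_compContinuousLinearMap_le _ _).trans ?_
  rw [Finset.prod_const, Finset.card_univ, Fintype.card_fin]
  push_cast
  gcongr
  exact (φ.hasFDerivAt (x := x)).le_of_lipschitz hφ

variable [MeasurableSpace E] [BorelSpace E] [MeasurableSpace E'] [BorelSpace E']

lemma eLpNorm_iteratedFDeriv_comp_le (φ : E ≃ᴬ[ℝ] E') (hφ : LipschitzWith K φ)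
    (hu : ContDiff ℝ m u) {p : ℝ≥0∞} (hp' : p ≠ ⊤) {ν : Measure E} {ν' : Measure E'} {c : ℝ≥0}
    (hν : ν ≤ (c : ℝ≥0∞) • ν'.map φ.symm) :
    eLpNorm (iteratedFDeriv ℝ m (u ∘ φ)) p ν ≤
      (K ^ m * c ^ (1 / p.toReal) : ℝ≥0) * eLpNorm (iteratedFDeriv ℝ m u) p ν' := by
  have hcancel : (iteratedFDeriv ℝ m u ∘ φ) ∘ φ.symm = iteratedFDeriv ℝ m u :=
    funext fun y => congrArg _ (φ.apply_symm_apply y)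
  calc eLpNorm (iteratedFDeriv ℝ m (u ∘ φ)) p ν
      ≤ (K ^ m : ℝ≥0) • eLpNorm (iteratedFDeriv ℝ m u ∘ φ) p ν :=
        eLpNorm_le_nnreal_smul_eLpNorm_of_ae_le_mul (g := iteratedFDeriv ℝ m u ∘ φ)
          (.of_forall (nnnorm_iteratedFDeriv_comp_continuousAffineMap_le
            φ.toContinuousAffineMap hφ hu)) p
    _ ≤ (K ^ m : ℝ≥0) • eLpNorm (iteratedFDeriv ℝ m u ∘ φ) p ((c : ℝ≥0∞) • ν'.map φ.symm) := by
        gcongr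
    _ = _ := by
        rw [eLpNorm_smul_measure_of_ne_top hp',
          φ.symm.toHomeomorph.measurableEmbedding.eLpNorm_map_measure (f := φ.symm), hcancel]
        rw [ENNReal.toReal_div, ENNReal.toReal_one, ENNReal.coe_mul,
          ENNReal.coe_rpow_of_nonneg _ (by positivity), smul_eq_mul, ENNReal.smul_def, smul_eq_mul,
          mul_assoc]

end Derivatives

section Estimate

variable {N k s m : ℕ} {p : ℝ≥0∞} {T : Set (EuclideanSpace ℝ (Fin N))}
  {u P : EuclideanSpace ℝ (Fin N) → ℝ}

lemma IsL2Projection.comp_continuousAffineEquiv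
    (φ : EuclideanSpace ℝ (Fin N) ≃ᴬ[ℝ] EuclideanSpace ℝ (Fin N)) (hT : MeasurableSet T)
    (hP : IsL2Projection k (φ '' T) u P) : IsL2Projection k T (u ∘ φ) (P ∘ φ) := by
  refine ⟨hP.1.comp_affineMap φ.toAffineEquiv.toAffineMap, fun q hq => ?_⟩
  have hdet : |φ.toContinuousAffineMap.contLinear.det| ≠ 0 :=
    abs_ne_zero.2 (LinearEquiv.isUnit_det' φ.toAffineEquiv.linear).ne_zero
  have hint := hP.2 _ (hq.comp_affineMap φ.toAffineEquiv.symm.toAffineMap)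
  rw [setIntegral_image_continuousAffineEquiv volume φ hT,
    setIntegral_image_continuousAffineEquiv volume φ hT] at hint
  simpa using smul_right_injective ℝ hdet hint

theorem TraceEstimate.image {C : ℝ≥0} (hC : TraceEstimate k s m p T C) (hN : 1 ≤ N)
    (hp' : p ≠ ⊤) (hT : MeasurableSet T)
    (φ : EuclideanSpace ℝ (Fin N) ≃ᴬ[ℝ] EuclideanSpace ℝ (Fin N)) {K L : ℝ≥0}
    (hφ : LipschitzWith K φ) (hφ' : LipschitzWith L φ.symm) :
    TraceEstimate k s m p (φ '' T) (L ^ m * (K ^ ((N : ℝ) - 1)) ^ (1 / p.toReal) *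
      (C * (K ^ s * (L ^ N) ^ (1 / p.toReal)))) := by
  intro u P hu hP
  have hφ_smooth : ContDiff ℝ ∞ φ := φ.toContinuousAffineMap.contDiff
  have hd : (0 : ℝ) ≤ N - 1 := sub_nonneg.2 (mod_cast hN)
  have hfrontier : frontier (φ '' T) = φ '' frontier T := (φ.toHomeomorph.image_frontier T).symm
  have hw : ContDiff ℝ ∞ (u - P) := hu.sub hP.1.contDiff
  have hcancel : u - P = (u ∘ φ - P ∘ φ) ∘ φ.symm := by
    ext x
    simp
  have hvolume : volume.restrict T ≤
      ((L ^ N : ℝ≥0) : ℝ≥0∞) • (volume.restrict (φ '' T)).map φ.symm := by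
    simpa only [φ.symm_image_image, finrank_euclideanSpace_fin] using
      addHaar_restrict_image_le hφ' volume (φ '' T)
  calc eLpNorm (iteratedFDeriv ℝ m (u - P)) p (μH[(N : ℝ) - 1].restrict (frontier (φ '' T)))
      ≤ (L ^ m * (K ^ ((N : ℝ) - 1)) ^ (1 / p.toReal) : ℝ≥0) *
          eLpNorm (iteratedFDeriv ℝ m (u ∘ φ - P ∘ φ)) p
            (μH[(N : ℝ) - 1].restrict (frontier T)) := by
        rw [hcancel, hfrontier]
        exact eLpNorm_iteratedFDeriv_comp_le φ.symm hφ'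
          (contDiff_infty.1 (hw.comp hφ_smooth) m) hp' (hausdorffMeasure_restrict_image_le hφ hd _)
    _ ≤ (L ^ m * (K ^ ((N : ℝ) - 1)) ^ (1 / p.toReal) : ℝ≥0) * (C * sobSemi s p T (u ∘ φ)) := by
        gcongr
        exact hC _ _ (hu.comp hφ_smooth) (hP.comp_continuousAffineEquiv φ hT)
    _ ≤ (L ^ m * (K ^ ((N : ℝ) - 1)) ^ (1 / p.toReal) : ℝ≥0) *
          (C * ((K ^ s * (L ^ N) ^ (1 / p.toReal) : ℝ≥0) * sobSemi s p (φ '' T) u)) := by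
        gcongr
        simp only [sobSemi_eq_eLpNorm_iteratedFDeriv]
        exact eLpNorm_iteratedFDeriv_comp_le φ hφ (contDiff_infty.1 hu s) hp' hvolume
    _ = _ := by push_cast; ring

end Estimate

end AffineTransport

section ShapeRegularity

lemma exists_continuousAffineEquiv_image_interior_convexHull {ι E : Type*} [NormedAddCommGroup E]
    [NormedSpace ℝ E] [FiniteDimensional ℝ E] (b b' : AffineBasis ι ℝ E) :
    ∃ φ : E ≃ᴬ[ℝ] E,
      φ '' interior (convexHull ℝ (Set.range b)) = interior (convexHull ℝ (Set.range b')) := by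
  obtain ⟨i⟩ := b.nonempty
  let A : E ≃ₗ[ℝ] E := (b.basisOf i).equiv (b'.basisOf i) (Equiv.refl _)
  let φ : E ≃ᴬ[ℝ] E := (AffineEquiv.ofLinearEquiv A (b i) (b' i)).toContinuousAffineEquiv
  have hA (j : ι) : A (b j -ᵥ b i) = b' j -ᵥ b' i := by
    by_cases hj : j = i
    · rw [hj, vsub_self, vsub_self, map_zero]
    · have := (b.basisOf i).equiv_apply ⟨j, hj⟩ (b'.basisOf i) (Equiv.refl _)
      rwa [Equiv.refl_apply, b.basisOf_apply, b'.basisOf_apply] at this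
  have hφ : φ ∘ b = b' := funext fun j => by
    change A (b j -ᵥ b i) +ᵥ b' i = b' j
    rw [hA, vsub_vadd]
  refine ⟨φ, ?_⟩
  calc φ '' interior (convexHull ℝ (Set.range b))
      = interior (φ '' convexHull ℝ (Set.range b)) := φ.toHomeomorph.image_interior _
    _ = interior (convexHull ℝ (φ '' Set.range b)) :=
        congrArg interior (φ.toAffineEquiv.toAffineMap.image_convexHull _)
    _ = _ := by rw [← Set.range_comp, hφ]

lemma exists_closedBall_subset_of_lt_sSup {X : Type*} [PseudoMetricSpace X] [Nonempty X]
    {T : Set X} {r : ℝ} (hr : r < sSup {r : ℝ | ∃ x, ball x r ⊆ T}) :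
    ∃ x, closedBall x r ⊆ T := by
  obtain ⟨r', ⟨x, hx⟩, hr'⟩ := exists_lt_of_lt_csSup
    (s := {r : ℝ | ∃ x, ball x r ⊆ T}) ⟨0, Classical.arbitrary X, by simp⟩ hr
  exact ⟨x, (closedBall_subset_ball hr').trans hx⟩

lemma diam_pos_of_isOpen {E : Type*} [NormedAddCommGroup E] [NormedSpace ℝ E] [Nontrivial E]
    {T : Set E} (hT : IsOpen T) (hTn : T.Nonempty) (hTb : Bornology.IsBounded T) :
    0 < diam T := by
  obtain ⟨x, hx⟩ := hTn
  have : (nhdsWithin x {x}ᶜ).NeBot := Module.punctured_nhds_neBot ℝ _ x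
  exact diam_pos (infinite_of_mem_nhds x (hT.mem_nhds hx)).nontrivial hTb

lemma pow_mul_rpow_scaling {K : ℝ≥0} (hK : K ≠ 0) (L C : ℝ≥0) {m s : ℕ} (hm : m ≤ s) (N : ℕ)
    (t : ℝ) :
    L ^ m * (K ^ ((N : ℝ) - 1)) ^ t * (C * (K ^ s * (L ^ N) ^ t)) =
      C * (K * L) ^ m * ((K * L) ^ N) ^ t * (K ^ (s - m) / K ^ t) := by
  rw [NNReal.rpow_sub_one hK, NNReal.div_rpow, NNReal.rpow_natCast, mul_pow, mul_pow,
    NNReal.mul_rpow, ← pow_mul_pow_sub K hm]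
  ring

variable {N k s m : ℕ} {p : ℝ≥0∞}

theorem exists_traceEstimate_of_closedBall_subset (hN : 1 ≤ N) (hp : 1 ≤ p) (hp' : p ≠ ⊤)
    (hsk : s ≤ k + 1) (hm : m < s) {c : ℝ≥0} (hc : c ≠ 0) :
    ∃ C : ℝ≥0, ∀ (b : AffineBasis (Fin (N + 1)) ℝ (EuclideanSpace ℝ (Fin N))) (h : ℝ≥0)
      (y : EuclideanSpace ℝ (Fin N)), h ≠ 0 →
      diam (interior (convexHull ℝ (Set.range b))) ≤ h →
      closedBall y (c * h) ⊆ interior (convexHull ℝ (Set.range b)) →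
      TraceEstimate k s m p (interior (convexHull ℝ (Set.range b)))
        (C * (h ^ (s - m) / h ^ (1 / p.toReal))) := by
  have hbounded (b : AffineBasis (Fin (N + 1)) ℝ (EuclideanSpace ℝ (Fin N))) :
      Bornology.IsBounded (interior (convexHull ℝ (Set.range b))) :=
    ((Set.finite_range b).isCompact_convexHull ℝ).isBounded.subset interior_subset
  obtain ⟨b₀⟩ : Nonempty (AffineBasis (Fin (N + 1)) ℝ (EuclideanSpace ℝ (Fin N))) :=
    AffineBasis.exists_affineBasis_of_finiteDimensional (by simp)
  obtain ⟨C₀, hC₀⟩ := exists_traceEstimate b₀ hp hp' hsk hm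
  set T₀ := interior (convexHull ℝ (Set.range b₀))
  obtain ⟨x₀, hx₀⟩ : T₀.Nonempty := interior_convexHull_nonempty_iff_affineSpan_eq_top.2 b₀.tot
  obtain ⟨r, hr, hrT₀⟩ := nhds_basis_closedBall.mem_iff.1 (isOpen_interior.mem_nhds hx₀)
  lift r to ℝ≥0 using hr.le
  have hr0 : r ≠ 0 := (NNReal.coe_pos.1 hr).ne'
  lift diam T₀ to ℝ≥0 using diam_nonneg with D hD
  set M := D / (c * r)
  refine ⟨C₀ * M ^ m * (M ^ N) ^ (1 / p.toReal) * (r ^ (1 / p.toReal) / r ^ (s - m)),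
    fun b h y hh hdiam hy => ?_⟩
  obtain ⟨φ, hφT⟩ := exists_continuousAffineEquiv_image_interior_convexHull b₀ b
  have hφ : LipschitzWith (h / r) φ := lipschitzWith_of_mapsTo_closedBall φ.toContinuousAffineMap
    hr0 (hbounded b) hdiam fun x hx => hφT ▸ Set.mem_image_of_mem φ (hrT₀ hx)
  have hφ' : LipschitzWith (D / (c * h)) φ.symm :=
    lipschitzWith_of_mapsTo_closedBall φ.symm.toContinuousAffineMap (mul_ne_zero hc hh)
      (hbounded b₀) hD.ge fun x hx => by
        obtain ⟨z, hz, rfl⟩ := hφT.ge (hy hx)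
        simpa using hz
  have hM : h / r * (D / (c * h)) = M := by
    simp only [M]
    field_simp
  rw [← hφT]
  convert hC₀.image hN hp' isOpen_interior.measurableSet φ hφ hφ' using 1
  rw [pow_mul_rpow_scaling (div_ne_zero hh hr0) _ _ hm.le, hM, div_pow h r, NNReal.div_rpow h r]
  field_simp

theorem exists_traceEstimate_of_shapeRegular (hN : 1 ≤ N) (hp : 1 ≤ p) (hp' : p ≠ ⊤)
    (hsk : s ≤ k + 1) (hm : m < s) {ϱ : ℝ} (hϱ : 0 < ϱ) :
    ∃ C : ℝ≥0, ∀ f : Fin (N + 1) → EuclideanSpace ℝ (Fin N), AffineIndependent ℝ f → ∀ h : ℝ≥0,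
      diam (interior (convexHull ℝ (Set.range f))) = h →
      ϱ * h ≤ sSup {r : ℝ | ∃ x, ball x r ⊆ interior (convexHull ℝ (Set.range f))} →
      TraceEstimate k s m p (interior (convexHull ℝ (Set.range f)))
        (C * (h ^ (s - m) / h ^ (1 / p.toReal))) := by
  lift ϱ to ℝ≥0 using hϱ.le
  have hϱ' : ϱ / 2 ≠ 0 := (half_pos (NNReal.coe_pos.1 hϱ)).ne'
  obtain ⟨C, hC⟩ := exists_traceEstimate_of_closedBall_subset hN hp hp' hsk hm hϱ'
  refine ⟨C, fun f hf h hdiam hreg => ?_⟩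
  let b : AffineBasis (Fin (N + 1)) ℝ (EuclideanSpace ℝ (Fin N)) :=
    ⟨f, hf, hf.affineSpan_eq_top_iff_card_eq_finrank_add_one.2 (by simp)⟩
  have : Nonempty (Fin N) := ⟨⟨0, hN⟩⟩
  have hh : 0 < (h : ℝ) := hdiam ▸ diam_pos_of_isOpen isOpen_interior
    (interior_convexHull_nonempty_iff_affineSpan_eq_top.2 b.tot)
    (((Set.finite_range f).isCompact_convexHull ℝ).isBounded.subset interior_subset)
  obtain ⟨y, hy⟩ := exists_closedBall_subset_of_lt_sSup (r := (ϱ / 2 : ℝ≥0) * h)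
    (hreg.trans_lt' (by push_cast; nlinarith [mul_pos hϱ hh]))
  exact hC b h y (NNReal.coe_pos.1 hh).ne' hdiam.le hy

end ShapeRegularity

/-- Approximation properties of traces of $L^2$-projections on local polynomial spaces,
on nondegenerate simplices. -/
theorem trace_approximation_of_l2_projection_simplex
    (N k : ℕ) (hN : 1 ≤ N) (s : ℕ) (hs : 1 ≤ s) (hsk : s ≤ k + 1)
    (p : ℝ≥0∞) (hp : 1 ≤ p) (hp' : p ≠ ⊤) (ϱ : ℝ) (hϱ : 0 < ϱ) :
    ∃ C : ℝ, 0 < C ∧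
      ∀ (f : Fin (N + 1) → EuclideanSpace ℝ (Fin N)), AffineIndependent ℝ f →
      ∀ T : Set (EuclideanSpace ℝ (Fin N)),
        T = interior (convexHull ℝ (Set.range f)) →
        ϱ * Metric.diam T ≤ sSup {r : ℝ | ∃ x, Metric.ball x r ⊆ T} →
      ∀ v : EuclideanSpace ℝ (Fin N) → ℝ,
        (∃ V, IsOpen V ∧ closure T ⊆ V ∧ ContDiffOn ℝ (⊤ : ℕ∞) v V) →
      ∀ P : EuclideanSpace ℝ (Fin N) → ℝ, IsPolyDegLE N k P →
        (∀ q : EuclideanSpace ℝ (Fin N) → ℝ, IsPolyDegLE N k q →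
          ∫ x in T, P x * q x = ∫ x in T, v x * q x) →
      ∀ m : ℕ, m ≤ s - 1 →
        ENNReal.ofReal (Metric.diam T ^ (1 / p.toReal)) *
            eLpNorm (fun x => ‖iteratedFDeriv ℝ m (fun y => v y - P y) x‖) p
              ((μH[(N : ℝ) - 1]).restrict (frontier T))
          ≤ ENNReal.ofReal (C * Metric.diam T ^ (s - m)) * sobSemi s p T v := by
  choose! C hC using fun m (hm : m < s) =>
    exists_traceEstimate_of_shapeRegular hN hp hp' hsk hm hϱ
  refine ⟨(1 + ∑ m ∈ Finset.range s, C m : ℝ≥0), by positivity, ?_⟩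
  rintro f hf T rfl hreg v ⟨V, hV, hTV, hv⟩ P hP hPv m hm
  have hms : m < s := by lia
  lift diam (interior (convexHull ℝ (Set.range f))) to ℝ≥0 using diam_nonneg with h hh
  have htrace := (hC m hms f hf h hh.symm hreg).of_contDiffOn isOpen_interior hV hTV hv ⟨hP, hPv⟩
  have hCm : C m ≤ 1 + ∑ m ∈ Finset.range s, C m :=
    (Finset.single_le_sum_of_canonicallyOrdered (Finset.mem_range.2 hms)).trans le_add_self
  have hscale : h ^ (1 / p.toReal) * (C m * (h ^ (s - m) / h ^ (1 / p.toReal))) ≤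
      (1 + ∑ m ∈ Finset.range s, C m) * h ^ (s - m) := by
    rw [mul_left_comm, mul_div_left_comm]
    exact mul_le_mul' hCm (mul_le_of_le_one_right' (div_self_le_one _))
  rw [← NNReal.coe_rpow, ENNReal.ofReal_coe_nnreal, ← NNReal.coe_pow, ← NNReal.coe_mul,
    ENNReal.ofReal_coe_nnreal]
  grw [htrace, ← mul_assoc, ← ENNReal.coe_mul, hscale]
end
end
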